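/- arXiv:1804.03785 — 2 statements merged into one kernel-verified Lean document; each statement's English description precedes it below -/
import Mathlib

section
/- For a number field K of degree n, the ideal counting function satisfies I_K(x) = ρ_K·x + Δ_K(x) where ρ_K is the residue of ζ_K at s = 1 and Δ_K(x) = o(x) as x → ∞; equivalently, I_K(x) ~ ρ_K·x. -/
open NumberField Filter

/-- The ideal counting function: the number of nonzero integral ideals of norm at most `x`. -/
noncomputable def idealCount (K : Type*) [Field K] [NumberField K] (x : ℝ) : ℕ :=
  Nat.card {I : Ideal (𝓞 K) // I ≠ ⊥ ∧ (Ideal.absNorm I : ℝ) ≤ x}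

open scoped nonZeroDivisors Topology

theorem idealCount_eq_card_nonZeroDivisors (K : Type*) [Field K] [NumberField K] (x : ℝ) :
    idealCount K x =
      Nat.card {I : (Ideal (𝓞 K))⁰ // (Ideal.absNorm (I : Ideal (𝓞 K)) : ℝ) ≤ x} := by
  simp only [idealCount, ← Ideal.zero_eq_bot, ← mem_nonZeroDivisors_iff_ne_zero]
  exact Nat.card_congr
    (Equiv.subtypeSubtypeEquivSubtypeInter (· ∈ (Ideal (𝓞 K))⁰) (Ideal.absNorm · ≤ x)).symm

theorem tendsto_idealCount_div_atTop (K : Type*) [Field K] [NumberField K] :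
    Tendsto (fun x : ℝ => (idealCount K x : ℝ) / x) atTop (𝓝 (dedekindZeta_residue K)) := by
  simpa only [idealCount_eq_card_nonZeroDivisors, dedekindZeta_residue_def] using
    NumberField.Ideal.tendsto_norm_le_div_atTop₀ K

theorem ideal_count_asymptotic (K : Type*) [Field K] [NumberField K] :
    Tendsto (fun x : ℝ => (idealCount K x : ℝ) / x) atTop
      (nhds ((2 ^ InfinitePlace.nrRealPlaces K * (2 * Real.pi) ^ InfinitePlace.nrComplexPlaces K *
        classNumber K * Units.regulator K) /
        (Units.torsionOrder K * Real.sqrt |(discr K : ℝ)|))) := by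
  rw [mul_right_comm, ← dedekindZeta_residue_def]
  exact tendsto_idealCount_div_atTop K
end

section
/- For a number field K of degree n over ℚ, the Dedekind zeta function satisfies the functional equation ζ_K(1−s) = D_K^{s−1/2} · 2^{n(1−s)} · π^{−ns} · Γ(s)^n · (cos(πs/2))^{r₁+r₂} · (sin(πs/2))^{r₂} · ζ_K(s), as an identity of meromorphic functions on ℂ. -/
/-!
Hecke's proof. For a fractional ideal `I` and positive weights `y` at the infinite places, Poisson
summation for the Gaussian attached to the weighted trace form relates the theta series of `I` at
`y` to that of the trace-dual ideal at `y⁻¹`. Writing `y` as a scale `x` times a point of the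
logarithmic space and averaging over a fundamental domain of the unit lattice gives a function of
`x` alone, whose Mellin transform `Λ` inherits the symmetry `s ↦ n / 2 - s`. Unfolding the average
over the units turns the sum over `I` into a sum over principal ideals and the domain into the
whole logarithmic space, where the integral splits into Gamma integrals, one per infinite place.
Hence the sum of `N(I) ^ s * Λ_I` over representatives of the ideal classes is the completed zeta
function. Duality carries one system of representatives to another, which gives the symmetric
functional equation; the reflection and duplication formulas put it in the asymmetric form.
-/

open NumberField Complex

namespace Hecke

open MeasureTheory Set

section Poisson

variable {ι : Type*}

/-- The `ℤ^ι`-periodic function obtained by summing the translates of `f`. -/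
noncomputable def periodization (f : (ι → ℝ) → ℂ) (x : ι → ℝ) : ℂ :=
  ∑' m : ι → ℤ, f (x + fun i ↦ (m i : ℝ))

lemma periodization_add_intCast (f : (ι → ℝ) → ℂ) (x : ι → ℝ) (n : ι → ℤ) :
    periodization f (x + fun i ↦ (n i : ℝ)) = periodization f x := by
  rw [periodization, periodization,
    ← (Equiv.addLeft n).tsum_eq fun m : ι → ℤ ↦ f (x + fun i ↦ (m i : ℝ))]
  refine tsum_congr fun m ↦ congrArg f ?_
  ext i
  simp [add_assoc]

lemma periodization_eq_of_coe_eq (f : (ι → ℝ) → ℂ) {x y : ι → ℝ}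
    (hxy : (fun i ↦ (x i : UnitAddCircle)) = fun i ↦ (y i : UnitAddCircle)) :
    periodization f x = periodization f y := by
  have hint (i : ι) : ∃ n : ℤ, x i = y i + n := by
    have hi := congrFun hxy i
    rw [QuotientAddGroup.eq, AddSubgroup.mem_zmultiples_iff] at hi
    obtain ⟨n, hn⟩ := hi
    refine ⟨-n, ?_⟩
    rw [zsmul_one] at hn
    push_cast
    linarith
  choose n hn using hint
  rw [← periodization_add_intCast f y n]
  exact congrArg _ (funext hn)

variable [Fintype ι]

/-- The coordinate description of the lattice `ℤ^ι ⊆ ℝ^ι` spanned by the standard basis. -/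
noncomputable def stdLatticeEquiv : (ι → ℤ) ≃ Submodule.span ℤ (range (Pi.basisFun ℝ ι)) :=
  ((Pi.basisFun ℝ ι).restrictScalars ℤ).equivFun.symm.toEquiv

lemma coe_stdLatticeEquiv (m : ι → ℤ) :
    (stdLatticeEquiv m : ι → ℝ) = fun i ↦ (m i : ℝ) := by
  classical
  ext i
  simp [stdLatticeEquiv, Module.Basis.equivFun_symm_apply, Pi.single_apply]

/-- The character `x ↦ exp(-2πi k·x)` of `ℝ^ι` that is trivial on `ℤ^ι`. -/
noncomputable def latticeChar (k : ι → ℤ) (x : ι → ℝ) : ℂ :=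
  cexp (-(2 * Real.pi * I * ∑ i, (k i : ℂ) * x i))

lemma mFourier_neg_coe (k : ι → ℤ) (x : ι → ℝ) :
    UnitAddTorus.mFourier (-k) (fun i ↦ (x i : UnitAddCircle)) = latticeChar k x := by
  simp only [UnitAddTorus.mFourier, latticeChar, ContinuousMap.coe_mk, Pi.neg_apply,
    fourier_coe_apply]
  rw [← Complex.exp_sum, Finset.mul_sum, ← Finset.sum_neg_distrib]
  congr 1
  refine Finset.sum_congr rfl fun i _ ↦ ?_
  push_cast
  ring

lemma norm_latticeChar (k : ι → ℤ) (x : ι → ℝ) : ‖latticeChar k x‖ = 1 := by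
  have h : -(2 * Real.pi * I * ∑ i, (k i : ℂ) * x i) =
      ((-(2 * Real.pi * ∑ i, (k i : ℝ) * x i) : ℝ) : ℂ) * I := by
    push_cast
    ring
  rw [latticeChar, h, Complex.norm_exp_ofReal_mul_I]

lemma continuous_latticeChar (k : ι → ℤ) : Continuous (latticeChar k) := by
  unfold latticeChar
  fun_prop

lemma latticeChar_add_intCast (k m : ι → ℤ) (x : ι → ℝ) :
    latticeChar k (x + fun i ↦ (m i : ℝ)) = latticeChar k x := by
  rw [← mFourier_neg_coe, ← mFourier_neg_coe]
  congr 1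
  ext i
  simp

/-- The translates of `f` by `ℤ^ι` are dominated, uniformly on bounded sets, by a summable
family; this is the decay condition under which `f` can be periodized. -/
def LatticeDominated (f : (ι → ℝ) → ℂ) : Prop :=
  ∀ R : ℝ, ∃ u : (ι → ℤ) → ℝ, Summable u ∧
    ∀ x : ι → ℝ, ‖x‖ ≤ R → ∀ m : ι → ℤ, ‖f (x + fun i ↦ (m i : ℝ))‖ ≤ u m

variable {f : (ι → ℝ) → ℂ}

lemma LatticeDominated.latticeChar_mul (hf : LatticeDominated f) (k : ι → ℤ) :
    LatticeDominated fun x ↦ latticeChar k x * f x := by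
  intro R
  obtain ⟨u, hu, hfu⟩ := hf R
  refine ⟨u, hu, fun x hx m ↦ ?_⟩
  rw [norm_mul, norm_latticeChar, one_mul]
  exact hfu x hx m

lemma LatticeDominated.continuous_periodization (hf : LatticeDominated f) (hc : Continuous f) :
    Continuous (periodization f) := by
  rw [continuous_iff_continuousAt]
  intro x
  obtain ⟨u, hu, hfu⟩ := hf (‖x‖ + 1)
  have hball : ContinuousOn (periodization f) (Metric.ball x 1) := by
    refine continuousOn_tsum (fun m ↦ (hc.comp (by fun_prop)).continuousOn) hu
      fun m y hy ↦ hfu y ?_ m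
    have hyx : ‖y - x‖ < 1 := by simpa [dist_eq_norm] using hy
    linarith [norm_sub_norm_le y x]
  exact hball.continuousAt (Metric.ball_mem_nhds x one_pos)

lemma periodization_latticeChar_mul (k : ι → ℤ) (x : ι → ℝ) :
    periodization (fun y ↦ latticeChar k y * f y) x = latticeChar k x * periodization f x := by
  rw [periodization, periodization, ← tsum_mul_left]
  simp only [latticeChar_add_intCast]

lemma exists_torus_periodization (hf : LatticeDominated f) (hc : Continuous f) :
    ∃ G : C(UnitAddTorus ι, ℂ),
      ∀ x : ι → ℝ, G (fun i ↦ (x i : UnitAddCircle)) = periodization f x := by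
  have hp : IsOpenQuotientMap fun (x : ι → ℝ) i ↦ (x i : UnitAddCircle) :=
    IsOpenQuotientMap.piMap fun _ ↦ QuotientAddGroup.isOpenQuotientMap_mk
  have hlift (x : ι → ℝ) : periodization f (Function.surjInv hp.surjective
      fun i ↦ (x i : UnitAddCircle)) = periodization f x :=
    periodization_eq_of_coe_eq f (Function.surjInv_eq hp.surjective _)
  refine ⟨⟨fun z ↦ periodization f (Function.surjInv hp.surjective z), ?_⟩, hlift⟩
  rw [hp.isQuotientMap.continuous_iff]
  convert hf.continuous_periodization hc using 1
  exact funext hlift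

lemma unitCube_ae_eq_fundamentalDomain :
    ({x | ∀ i, x i ∈ Ioc ((0 : ι → ℝ) i) ((0 : ι → ℝ) i + 1)} : Set (ι → ℝ))
      =ᵐ[volume] ZSpan.fundamentalDomain (Pi.basisFun ℝ ι) := by
  have hpi : ({x | ∀ i, x i ∈ Ioc ((0 : ι → ℝ) i) ((0 : ι → ℝ) i + 1)} : Set (ι → ℝ)) =
      Set.pi univ fun _ : ι ↦ Ioc (0 : ℝ) 1 := by
    ext x
    simp
  rw [ZSpan.fundamentalDomain_pi_basisFun, hpi]
  exact (Measure.univ_pi_Ioc_ae_eq_Icc (μ := fun _ : ι ↦ volume) (f := fun _ ↦ 0)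
    (g := fun _ ↦ 1)).trans (Measure.univ_pi_Ico_ae_eq_Icc (μ := fun _ : ι ↦ volume)
    (f := fun _ ↦ 0) (g := fun _ ↦ 1)).symm

lemma norm_le_one_of_mem_fundamentalDomain {x : ι → ℝ}
    (hx : x ∈ ZSpan.fundamentalDomain (Pi.basisFun ℝ ι)) : ‖x‖ ≤ 1 := by
  rw [ZSpan.fundamentalDomain_pi_basisFun] at hx
  refine (pi_norm_le_iff_of_nonneg zero_le_one).2 fun i ↦ ?_
  rw [Real.norm_eq_abs, abs_le]
  constructor <;> linarith [(hx i (mem_univ i)).1, (hx i (mem_univ i)).2]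

lemma LatticeDominated.setIntegral_periodization (hf : LatticeDominated f) (hc : Continuous f) :
    ∫ x in ZSpan.fundamentalDomain (Pi.basisFun ℝ ι), periodization f x =
      ∑' m : ι → ℤ, ∫ x in ZSpan.fundamentalDomain (Pi.basisFun ℝ ι),
        f (x + fun i ↦ (m i : ℝ)) := by
  set D := ZSpan.fundamentalDomain (Pi.basisFun ℝ ι)
  obtain ⟨u, hu, hfu⟩ := hf 1
  have hD : IsFiniteMeasure (volume.restrict D) :=
    ⟨by simpa using (ZSpan.fundamentalDomain_isBounded _).measure_lt_top⟩
  have hbound (m : ι → ℤ) :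
      ∀ᵐ x ∂(volume.restrict D), ‖f (x + fun i ↦ (m i : ℝ))‖ ≤ u m := by
    filter_upwards [ae_restrict_mem (ZSpan.fundamentalDomain_measurableSet _)] with x hx
    exact hfu x (norm_le_one_of_mem_fundamentalDomain hx) m
  refine (integral_tsum_of_summable_integral_norm (fun m ↦ ?_) ?_).symm
  · exact .of_bound (hc.comp (by fun_prop)).aestronglyMeasurable (u m) (hbound m)
  · refine .of_nonneg_of_le (fun m ↦ integral_nonneg fun _ ↦ norm_nonneg _) (fun m ↦ ?_)
      (hu.mul_left (volume.real D))
    calc ∫ x in D, ‖f (x + fun i ↦ (m i : ℝ))‖ ≤ ∫ _ in D, u m :=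
          integral_mono_of_nonneg (.of_forall fun _ ↦ norm_nonneg _) (integrable_const (u m))
            (hbound m)
      _ = volume.real D * u m := by simp

lemma LatticeDominated.setIntegral_periodization_eq_integral (hf : LatticeDominated f)
    (hc : Continuous f) (hint : Integrable f) :
    ∫ x in ZSpan.fundamentalDomain (Pi.basisFun ℝ ι), periodization f x = ∫ x, f x := by
  let b := Pi.basisFun ℝ ι
  have hinv : VAddInvariantMeasure (Submodule.span ℤ (range b)) (ι → ℝ) volume :=
    inferInstanceAs <| VAddInvariantMeasure (Submodule.span ℤ (range b)).toAddSubgroup _ _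
  have hvadd (m : ι → ℤ) (x : ι → ℝ) : stdLatticeEquiv m +ᵥ x = x + fun i ↦ (m i : ℝ) := by
    rw [Submodule.vadd_def, coe_stdLatticeEquiv, vadd_eq_add, add_comm]
  rw [hf.setIntegral_periodization hc,
    (ZSpan.isAddFundamentalDomain b volume).integral_eq_tsum'' _ hint,
    ← stdLatticeEquiv.tsum_eq]
  simp_rw [hvadd, b]

lemma LatticeDominated.mFourierCoeff_eq (hf : LatticeDominated f) (hc : Continuous f)
    (hint : Integrable f) {G : C(UnitAddTorus ι, ℂ)}
    (hG : ∀ x : ι → ℝ, G (fun i ↦ (x i : UnitAddCircle)) = periodization f x) (k : ι → ℤ) :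
    UnitAddTorus.mFourierCoeff G k = ∫ x, latticeChar k x * f x := by
  rw [UnitAddTorus.mFourierCoeff_eq_integral G k 0,
    setIntegral_congr_set unitCube_ae_eq_fundamentalDomain]
  simp_rw [hG, mFourier_neg_coe, smul_eq_mul, ← periodization_latticeChar_mul]
  exact (hf.latticeChar_mul k).setIntegral_periodization_eq_integral
    ((continuous_latticeChar k).mul hc)
    (hint.bdd_mul (c := 1) (continuous_latticeChar k).aestronglyMeasurable
      (.of_forall fun x ↦ (norm_latticeChar k x).le))

theorem LatticeDominated.tsum_eq_tsum_integral (hf : LatticeDominated f) (hc : Continuous f)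
    (hint : Integrable f)
    (hs : Summable fun k : ι → ℤ ↦ ∫ x : ι → ℝ, latticeChar k x * f x) :
    ∑' m : ι → ℤ, f (fun i ↦ (m i : ℝ)) =
      ∑' k : ι → ℤ, ∫ x : ι → ℝ, latticeChar k x * f x := by
  obtain ⟨G, hG⟩ := exists_torus_periodization hf hc
  have hcoeff := hf.mFourierCoeff_eq hc hint hG
  have hone (k : ι → ℤ) :
      UnitAddTorus.mFourier k (fun i ↦ ((0 : ι → ℝ) i : UnitAddCircle)) = 1 := by
    rw [← neg_neg k, mFourier_neg_coe]
    simp [latticeChar]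
  have hseries := UnitAddTorus.hasSum_mFourier_series_apply_of_summable
    (hs.congr fun k ↦ (hcoeff k).symm) (fun i ↦ ((0 : ι → ℝ) i : UnitAddCircle))
  simp only [hone, smul_eq_mul, mul_one, hG, hcoeff] at hseries
  simpa only [periodization, zero_add] using hseries.tsum_eq.symm

end Poisson

section Gaussian

open Matrix

variable {ι : Type*} [Fintype ι]

lemma summable_norm_intCast_rpow {r : ℝ} (hr : r < -(Fintype.card ι : ℝ)) :
    Summable fun m : ι → ℤ ↦ ‖(fun i ↦ (m i : ℝ) : ι → ℝ)‖ ^ r := by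
  classical
  let b := Pi.basisFun ℝ ι
  have hrank : Module.finrank ℤ (Submodule.span ℤ (range b)) = Fintype.card ι :=
    Module.finrank_eq_card_basis (b.restrictScalars ℤ)
  have hsum := ZLattice.summable_norm_rpow (Submodule.span ℤ (range b)) r (by rwa [hrank])
  rw [← stdLatticeEquiv.summable_iff] at hsum
  refine hsum.congr fun m ↦ ?_
  rw [← coe_stdLatticeEquiv]
  rfl

lemma summable_exp_neg_norm_intCast_sq {c : ℝ} (hc : 0 < c) :
    Summable fun m : ι → ℤ ↦ Real.exp (-c * ‖(fun i ↦ (m i : ℝ) : ι → ℝ)‖ ^ 2) := by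
  let N := Fintype.card ι + 1
  have hN : (-(2 * N : ℕ) : ℝ) < -(Fintype.card ι : ℝ) := by
    have : (0 : ℝ) ≤ Fintype.card ι := by positivity
    push_cast [N]
    linarith
  refine Summable.of_norm_bounded_eventually
    ((summable_norm_intCast_rpow hN).mul_left (N.factorial * (c ^ N)⁻¹)) ?_
  have hne : ∀ᶠ m : ι → ℤ in Filter.cofinite, m ≠ 0 := by simp
  filter_upwards [hne] with m hm
  set t := ‖(fun i ↦ (m i : ℝ) : ι → ℝ)‖
  have ht : 0 < t := by
    rw [norm_pos_iff]
    contrapose! hm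
    ext i
    simpa using congrFun hm i
  rw [Real.norm_eq_abs, abs_of_pos (Real.exp_pos _), Real.rpow_neg ht.le, Real.rpow_natCast,
    neg_mul, Real.exp_neg]
  calc (Real.exp (c * t ^ 2))⁻¹ ≤ ((c * t ^ 2) ^ N / N.factorial)⁻¹ :=
        inv_anti₀ (by positivity) (Real.pow_div_factorial_le_exp (c * t ^ 2) (by positivity) N)
    _ = _ := by
      rw [mul_pow, ← pow_mul]
      field_simp

lemma dotProduct_transpose_mul_self_mulVec (M : Matrix ι ι ℝ) (x : ι → ℝ) :
    x ⬝ᵥ (Mᵀ * M) *ᵥ x = M *ᵥ x ⬝ᵥ M *ᵥ x := by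
  rw [← mulVec_mulVec, dotProduct_mulVec, vecMul_transpose]

lemma norm_sq_le_dotProduct_self (x : ι → ℝ) : ‖x‖ ^ 2 ≤ x ⬝ᵥ x := by
  have hnorm : ‖x‖ ≤ √(x ⬝ᵥ x) := by
    refine (pi_norm_le_iff_of_nonneg (Real.sqrt_nonneg _)).2 fun i ↦ ?_
    rw [Real.norm_eq_abs, ← Real.sqrt_mul_self_eq_abs]
    exact Real.sqrt_le_sqrt (Finset.single_le_sum (f := fun i ↦ x i * x i)
      (fun i _ ↦ mul_self_nonneg _) (Finset.mem_univ i))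
  calc ‖x‖ ^ 2 ≤ √(x ⬝ᵥ x) ^ 2 := by gcongr
    _ = x ⬝ᵥ x := Real.sq_sqrt (Finset.sum_nonneg fun i _ ↦ mul_self_nonneg _)

open scoped MatrixOrder Matrix.Norms.L2Operator in
lemma exists_eq_transpose_mul_self [DecidableEq ι] {Q : Matrix ι ι ℝ} (hQ : Q.PosDef) :
    ∃ M : Matrix ι ι ℝ, IsUnit M.det ∧ Q = Mᵀ * M := by
  obtain ⟨M, hM⟩ := CStarAlgebra.nonneg_iff_eq_star_mul_self.mp hQ.posSemidef.nonneg
  rw [star_eq_conjTranspose, conjTranspose_eq_transpose_of_trivial] at hM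
  refine ⟨M, ?_, hM⟩
  have hdet := hQ.det_pos.ne'
  rw [hM, det_mul] at hdet
  exact (right_ne_zero_of_mul hdet).isUnit

lemma exists_mul_norm_sq_le {Q : Matrix ι ι ℝ} (hQ : Q.PosDef) :
    ∃ c > 0, ∀ x : ι → ℝ, c * ‖x‖ ^ 2 ≤ x ⬝ᵥ Q *ᵥ x := by
  classical
  obtain ⟨M, hM, rfl⟩ := exists_eq_transpose_mul_self hQ
  have hinj : LinearMap.ker (toLin' M) = ⊥ :=
    LinearMap.ker_eq_bot.2 (mulVec_injective_iff_isUnit.2 ((isUnit_iff_isUnit_det M).2 hM))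
  obtain ⟨C, hC, hlip⟩ := LinearMap.exists_antilipschitzWith _ hinj
  refine ⟨((C : ℝ)⁻¹) ^ 2, by positivity, fun x ↦ ?_⟩
  have hx : (C : ℝ)⁻¹ * ‖x‖ ≤ ‖M *ᵥ x‖ := by
    rw [inv_mul_le_iff₀ (by positivity)]
    exact ZeroHomClass.bound_of_antilipschitz _ hlip x
  calc ((C : ℝ)⁻¹) ^ 2 * ‖x‖ ^ 2 = ((C : ℝ)⁻¹ * ‖x‖) ^ 2 := (mul_pow _ _ _).symm
    _ ≤ ‖M *ᵥ x‖ ^ 2 := by gcongr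
    _ ≤ M *ᵥ x ⬝ᵥ M *ᵥ x := norm_sq_le_dotProduct_self _
    _ = x ⬝ᵥ (Mᵀ * M) *ᵥ x := (dotProduct_transpose_mul_self_mulVec M x).symm

/-- The Gaussian `x ↦ exp(-π xᵀQx)` attached to a real quadratic form. -/
noncomputable def gaussian (Q : Matrix ι ι ℝ) (x : ι → ℝ) : ℝ :=
  Real.exp (-Real.pi * (x ⬝ᵥ Q *ᵥ x))

lemma gaussian_nonneg (Q : Matrix ι ι ℝ) (x : ι → ℝ) : 0 ≤ gaussian Q x := (Real.exp_pos _).le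

lemma continuous_gaussian (Q : Matrix ι ι ℝ) : Continuous (gaussian Q) := by
  unfold gaussian
  fun_prop

variable {Q : Matrix ι ι ℝ}

lemma latticeChar_mul_gaussian [DecidableEq ι] {M : Matrix ι ι ℝ} (hM : IsUnit M.det) (k : ι → ℤ)
    (x : ι → ℝ) :
    latticeChar k x * gaussian (Mᵀ * M) x =
      cexp (-Real.pi * ∑ i, ((M *ᵥ x) i : ℂ) ^ 2 +
        ∑ i, -(2 * Real.pi * I * (M⁻¹ᵀ *ᵥ fun j ↦ (k j : ℝ)) i) * (M *ᵥ x) i) := by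
  have hpairing : (fun j ↦ (k j : ℝ)) ⬝ᵥ x = (M⁻¹ᵀ *ᵥ fun j ↦ (k j : ℝ)) ⬝ᵥ M *ᵥ x := by
    rw [dotProduct_mulVec, ← mulVec_transpose, mulVec_mulVec, ← transpose_mul,
      nonsing_inv_mul _ hM, transpose_one, one_mulVec]
  have hpairing' := congrArg (fun t : ℝ ↦ (t : ℂ)) hpairing
  simp only [dotProduct, ofReal_sum, ofReal_mul, ofReal_intCast] at hpairing'
  rw [gaussian, latticeChar, hpairing', ofReal_exp, ← Complex.exp_add,
    dotProduct_transpose_mul_self_mulVec, add_comm]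
  simp only [dotProduct, ofReal_mul, ofReal_neg, ofReal_sum, ofReal_pow, Finset.mul_sum,
    ← Finset.sum_neg_distrib, ← sq, ← mul_assoc, neg_mul]

lemma integral_latticeChar_mul_gaussian [DecidableEq ι] (hQ : Q.PosDef) (k : ι → ℤ) :
    ∫ x, latticeChar k x * gaussian Q x =
      ((√Q.det)⁻¹ * gaussian Q⁻¹ (fun i ↦ (k i : ℝ)) : ℝ) := by
  obtain ⟨M, hM, rfl⟩ := exists_eq_transpose_mul_self hQ
  let w := M⁻¹ᵀ *ᵥ fun i ↦ (k i : ℝ)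
  let g : (ι → ℝ) → ℂ := fun y ↦ cexp (-Real.pi * ∑ i, (y i : ℂ) ^ 2 +
    ∑ i, -(2 * Real.pi * I * w i) * y i)
  have hg : Continuous g := by fun_prop
  have hsubst : ∫ x, g (toLin' M x) = |M.det|⁻¹ * ∫ y, g y := by
    rw [← integral_map (LinearMap.continuous_of_finiteDimensional _).aemeasurable
      hg.aestronglyMeasurable, Real.map_matrix_volume_pi_eq_smul_volume_pi hM.ne_zero,
      integral_smul_measure, ENNReal.toReal_ofReal (abs_nonneg _), abs_inv, Complex.real_smul,
      ofReal_inv]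
  have hw : w ⬝ᵥ w = (fun i ↦ (k i : ℝ)) ⬝ᵥ (Mᵀ * M)⁻¹ *ᵥ fun i ↦ (k i : ℝ) := by
    rw [Matrix.mul_inv_rev, ← transpose_nonsing_inv]
    simpa only [transpose_transpose] using
      (dotProduct_transpose_mul_self_mulVec M⁻¹ᵀ fun i ↦ (k i : ℝ)).symm
  have hpi : (Real.pi : ℂ) ≠ 0 := ofReal_ne_zero.2 Real.pi_ne_zero
  calc ∫ x, latticeChar k x * gaussian (Mᵀ * M) x = ∫ x, g (toLin' M x) := by
        simp only [latticeChar_mul_gaussian hM, g, w, toLin'_apply]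
    _ = |M.det|⁻¹ * cexp ((∑ i, (-(2 * Real.pi * I * w i)) ^ 2) / (4 * Real.pi)) := by
        rw [hsubst, GaussianFourier.integral_cexp_neg_mul_sum_add (by simpa using Real.pi_pos),
          div_self hpi, Complex.one_cpow, one_mul]
    _ = |M.det|⁻¹ * Real.exp (-Real.pi * (w ⬝ᵥ w)) := by
        rw [Finset.sum_div, dotProduct]
        push_cast
        rw [Finset.mul_sum]
        congr 3 with i
        rw [neg_sq, mul_pow, mul_pow, mul_pow, Complex.I_sq]
        field_simp
        ring
    _ = _ := by
        rw [gaussian, ← hw, det_mul, det_transpose, Real.sqrt_mul_self_eq_abs]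
        push_cast
        rfl

lemma integrable_gaussian (hQ : Q.PosDef) : Integrable fun x ↦ (gaussian Q x : ℂ) := by
  classical
  by_contra hnot
  have hzero := integral_latticeChar_mul_gaussian hQ 0
  simp only [latticeChar, Pi.zero_apply, Int.cast_zero, zero_mul, Finset.sum_const_zero, mul_zero,
    neg_zero, Complex.exp_zero, one_mul, integral_undef hnot] at hzero
  have hpos : 0 < (√Q.det)⁻¹ * gaussian Q⁻¹ fun _ ↦ 0 :=
    mul_pos (inv_pos.2 (Real.sqrt_pos.2 hQ.det_pos)) (Real.exp_pos _)
  exact hpos.ne (ofReal_injective hzero)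

lemma latticeDominated_gaussian (hQ : Q.PosDef) :
    LatticeDominated fun x ↦ (gaussian Q x : ℂ) := by
  obtain ⟨c, hc, hlow⟩ := exists_mul_norm_sq_le hQ
  intro R
  refine ⟨fun m ↦ Real.exp (Real.pi * c * R ^ 2) *
    Real.exp (-(Real.pi * c / 2) * ‖(fun i ↦ (m i : ℝ) : ι → ℝ)‖ ^ 2),
    (summable_exp_neg_norm_intCast_sq (by positivity)).mul_left _, fun x hx m ↦ ?_⟩
  beta_reduce
  set y : ι → ℝ := fun i ↦ (m i : ℝ)
  rw [Complex.norm_real, Real.norm_eq_abs, gaussian, abs_of_pos (Real.exp_pos _), ← Real.exp_add,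
    Real.exp_le_exp]
  have htri : ‖y‖ ≤ ‖x + y‖ + R := by
    have := norm_sub_le (x + y) x
    rw [add_sub_cancel_left] at this
    linarith
  have hsq : ‖y‖ ^ 2 ≤ 2 * ‖x + y‖ ^ 2 + 2 * R ^ 2 := by
    have : ‖y‖ ^ 2 ≤ (‖x + y‖ + R) ^ 2 := by gcongr
    linarith [sq_nonneg (‖x + y‖ - R)]
  have hlow' := mul_le_mul_of_nonneg_left (hlow (x + y)) Real.pi_pos.le
  have hsq' := mul_le_mul_of_nonneg_left hsq (by positivity : 0 ≤ Real.pi * c / 2)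
  linarith

lemma summable_gaussian (hQ : Q.PosDef) :
    Summable fun m : ι → ℤ ↦ gaussian Q fun i ↦ (m i : ℝ) := by
  obtain ⟨u, hu, hle⟩ := latticeDominated_gaussian hQ 0
  refine hu.of_norm_bounded fun m ↦ ?_
  simpa using hle 0 (by simp) m

theorem tsum_gaussian [DecidableEq ι] (hQ : Q.PosDef) :
    ∑' m : ι → ℤ, gaussian Q (fun i ↦ (m i : ℝ)) =
      (√Q.det)⁻¹ * ∑' m : ι → ℤ, gaussian Q⁻¹ fun i ↦ (m i : ℝ) := by
  have hpoisson := (latticeDominated_gaussian hQ).tsum_eq_tsum_integral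
    (continuous_ofReal.comp (continuous_gaussian Q)) (integrable_gaussian hQ) (by
      simp_rw [integral_latticeChar_mul_gaussian hQ]
      exact Complex.summable_ofReal.2 ((summable_gaussian hQ.inv).mul_left _))
  simp_rw [integral_latticeChar_mul_gaussian hQ] at hpoisson
  rw [← Complex.ofReal_tsum, ← Complex.ofReal_tsum, tsum_mul_left] at hpoisson
  exact ofReal_injective hpoisson

end Gaussian

variable {K : Type*} [Field K] [NumberField K]

section TraceForm

open Matrix

variable {ι : Type*}

/-- The infinite place below an embedding, with embeddings taken `ℚ`-linear as in the library's
treatment of discriminants. -/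
noncomputable def embPlace (σ : K →ₐ[ℚ] ℂ) : InfinitePlace K := InfinitePlace.mk σ.toRingHom

lemma sum_embPlace (f : InfinitePlace K → ℝ) :
    ∑ σ, f (embPlace σ) = ∑ v : InfinitePlace K, v.mult * f v := by
  classical
  rw [← (RingHom.equivRatAlgHom K ℂ).sum_comp]
  change ∑ φ : K →+* ℂ, f (InfinitePlace.mk φ) = _
  rw [← Finset.sum_fiberwise (g := InfinitePlace.mk)]
  refine Finset.sum_congr rfl fun v _ ↦ ?_
  rw [Finset.sum_congr rfl (g := fun _ ↦ f v) fun φ hφ ↦ by rw [(Finset.mem_filter.1 hφ).2],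
    Finset.sum_const, InfinitePlace.card_filter_mk_eq, nsmul_eq_mul]

lemma prod_embPlace (f : InfinitePlace K → ℝ) :
    ∏ σ, f (embPlace σ) = ∏ v : InfinitePlace K, f v ^ v.mult := by
  classical
  rw [← (RingHom.equivRatAlgHom K ℂ).prod_comp]
  change ∏ φ : K →+* ℂ, f (InfinitePlace.mk φ) = _
  rw [← Finset.prod_fiberwise (g := InfinitePlace.mk)]
  refine Finset.prod_congr rfl fun v _ ↦ ?_
  rw [Finset.prod_congr rfl (g := fun _ ↦ f v) fun φ hφ ↦ by rw [(Finset.mem_filter.1 hφ).2],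
    Finset.prod_const, InfinitePlace.card_filter_mk_eq]

lemma norm_apply_eq_embPlace (σ : K →ₐ[ℚ] ℂ) (a : K) : ‖σ a‖ = embPlace σ a := rfl

/-- Complex conjugation on the embeddings of `K`. -/
noncomputable def embConj : (K →ₐ[ℚ] ℂ) ≃ (K →ₐ[ℚ] ℂ) :=
  AlgEquiv.arrowCongr AlgEquiv.refl (Complex.conjAe.restrictScalars ℚ)

lemma embConj_apply (σ : K →ₐ[ℚ] ℂ) (x : K) : embConj σ x = starRingEnd ℂ (σ x) := rfl

lemma embPlace_embConj (σ : K →ₐ[ℚ] ℂ) : embPlace (embConj σ) = embPlace σ :=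
  InfinitePlace.mk_conjugate_eq σ.toRingHom

/-- The trace form `∑ y_v |a|_v²` of `K ⊗ ℝ`, weighted at each infinite place; complex places
count twice. -/
noncomputable def weightedForm (y : InfinitePlace K → ℝ) (a : K) : ℝ :=
  ∑ v, v.mult * (y v * v a ^ 2)

/-- The Hermitian Gram matrix of a basis for the weighted trace form. Its entries are real
(`conj_hermitianGram`). -/
noncomputable def hermitianGram (b : Module.Basis ι ℚ K) (y : InfinitePlace K → ℝ) :
    Matrix ι ι ℂ :=
  fun i j ↦ ∑ σ : K →ₐ[ℚ] ℂ, y (embPlace σ) * (σ (b i) * starRingEnd ℂ (σ (b j)))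

/-- The real Gram matrix of a basis for the weighted trace form. -/
noncomputable def gram (b : Module.Basis ι ℚ K) (y : InfinitePlace K → ℝ) : Matrix ι ι ℝ :=
  (hermitianGram b y).map re

lemma hermitianGram_eq [DecidableEq (K →ₐ[ℚ] ℂ)] (b : Module.Basis ι ℚ K)
    (y : InfinitePlace K → ℝ) :
    hermitianGram b y = Algebra.embeddingsMatrix ℚ ℂ b *
      diagonal (fun σ ↦ (y (embPlace σ) : ℂ)) * (Algebra.embeddingsMatrix ℚ ℂ b)ᴴ := by
  ext i j
  rw [mul_apply]
  refine Finset.sum_congr rfl fun σ _ ↦ ?_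
  rw [mul_diagonal, conjTranspose_apply, Algebra.embeddingsMatrix_apply,
    Algebra.embeddingsMatrix_apply, ← starRingEnd_apply]
  ring

lemma conj_hermitianGram (b : Module.Basis ι ℚ K) (y : InfinitePlace K → ℝ) (i j : ι) :
    starRingEnd ℂ (hermitianGram b y i j) = hermitianGram b y i j := by
  simp only [hermitianGram, map_sum, map_mul, Complex.conj_ofReal, Complex.conj_conj]
  rw [← embConj.sum_comp]
  simp only [embPlace_embConj, embConj_apply, Complex.conj_conj]

lemma gram_map_ofReal (b : Module.Basis ι ℚ K) (y : InfinitePlace K → ℝ) :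
    (gram b y).map ofRealHom = hermitianGram b y := by
  ext i j
  exact Complex.conj_eq_iff_re.mp (conj_hermitianGram b y i j)

lemma hermitianGram_isHermitian (b : Module.Basis ι ℚ K) (y : InfinitePlace K → ℝ) :
    (hermitianGram b y).IsHermitian := by
  classical
  rw [hermitianGram_eq]
  refine isHermitian_mul_mul_conjTranspose _ (isHermitian_diagonal_of_self_adjoint _ ?_)
  exact funext fun σ ↦ Complex.conj_ofReal _

lemma hermitianGram_transpose (b : Module.Basis ι ℚ K) (y : InfinitePlace K → ℝ) :
    (hermitianGram b y)ᵀ = hermitianGram b y := by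
  ext i j
  rw [transpose_apply, ← conj_hermitianGram]
  exact (hermitianGram_isHermitian b y).apply i j

lemma gram_isHermitian (b : Module.Basis ι ℚ K) (y : InfinitePlace K → ℝ) :
    (gram b y).IsHermitian := by
  ext i j
  exact congrArg re (congrFun (congrFun (hermitianGram_transpose b y) i) j)

lemma embeddingsMatrix_mul_transpose_traceDual [Finite ι] [DecidableEq ι]
    (b : Module.Basis ι ℚ K) :
    Algebra.embeddingsMatrix ℚ ℂ b * (Algebra.embeddingsMatrix ℚ ℂ b.traceDual)ᵀ = 1 := by
  ext i j
  have hij := trace_eq_sum_embeddings (K := ℚ) (L := K) ℂ (x := b i * b.traceDual j)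
  rw [b.trace_mul_traceDual, apply_ite (algebraMap ℚ ℂ), map_one, map_zero] at hij
  rw [one_apply, hij, mul_apply]
  simp only [transpose_apply, Algebra.embeddingsMatrix_apply, map_mul]

variable [Fintype ι]

lemma hermitianGram_mul_traceDual [DecidableEq ι] (b : Module.Basis ι ℚ K)
    {y : InfinitePlace K → ℝ} (hy : ∀ v, 0 < y v) :
    hermitianGram b y * hermitianGram b.traceDual y⁻¹ = 1 := by
  classical
  let E := Algebra.embeddingsMatrix ℚ ℂ b
  let E' := Algebra.embeddingsMatrix ℚ ℂ b.traceDual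
  let D := diagonal fun σ : K →ₐ[ℚ] ℂ ↦ (y (embPlace σ) : ℂ)
  let D' := diagonal fun σ : K →ₐ[ℚ] ℂ ↦ (y⁻¹ (embPlace σ) : ℂ)
  have hE : E * E'ᵀ = 1 := embeddingsMatrix_mul_transpose_traceDual b
  have hcard : Fintype.card ι = Fintype.card (K →ₐ[ℚ] ℂ) := by
    rw [AlgHom.card, Module.finrank_eq_card_basis b]
  have hE' : Eᴴ * E'ᴴᵀ = 1 := by
    rw [← conjTranspose_transpose_eq_transpose_conjTranspose, ← conjTranspose_mul,
      (mul_eq_one_comm_of_card_eq _ _ _ hcard).1 hE, conjTranspose_one]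
  have hD : D * D' = 1 := by
    rw [diagonal_mul_diagonal, ← diagonal_one]
    congr 1 with σ
    rw [Pi.inv_apply, ← ofReal_mul, mul_inv_cancel₀ (hy _).ne', ofReal_one]
  calc hermitianGram b y * hermitianGram b.traceDual y⁻¹
      = E * D * (Eᴴ * E'ᴴᵀ) * D' * E'ᵀ := by
        rw [← hermitianGram_transpose b.traceDual, hermitianGram_eq, hermitianGram_eq,
          transpose_mul, transpose_mul, diagonal_transpose]
        simp only [Matrix.mul_assoc, E, E', D, D']
    _ = E * (D * D') * E'ᵀ := by rw [hE', Matrix.mul_one, Matrix.mul_assoc E]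
    _ = 1 := by rw [hD, Matrix.mul_one, hE]

lemma gram_mul_gram_traceDual [DecidableEq ι] (b : Module.Basis ι ℚ K)
    {y : InfinitePlace K → ℝ} (hy : ∀ v, 0 < y v) : gram b y * gram b.traceDual y⁻¹ = 1 := by
  refine Matrix.map_injective ofReal_injective ?_
  change (gram b y * gram b.traceDual y⁻¹).map ofRealHom = (1 : Matrix ι ι ℝ).map ofRealHom
  rw [Matrix.map_mul, gram_map_ofReal, gram_map_ofReal, hermitianGram_mul_traceDual b hy,
    Matrix.map_one _ (map_zero _) (map_one _)]

lemma gram_inv [DecidableEq ι] (b : Module.Basis ι ℚ K) {y : InfinitePlace K → ℝ}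
    (hy : ∀ v, 0 < y v) : (gram b y)⁻¹ = gram b.traceDual y⁻¹ :=
  inv_eq_right_inv (gram_mul_gram_traceDual b hy)

lemma det_gram [DecidableEq ι] (b : Module.Basis ι ℚ K) (y : InfinitePlace K → ℝ) :
    (gram b y).det = |(Algebra.discr ℚ b : ℝ)| * ∏ v : InfinitePlace K, y v ^ v.mult := by
  classical
  obtain ⟨e⟩ : Nonempty (ι ≃ (K →ₐ[ℚ] ℂ)) := ⟨Fintype.equivOfCardEq <| by
    rw [AlgHom.card, Module.finrank_eq_card_basis b]⟩
  let E := Algebra.embeddingsMatrixReindex ℚ ℂ b e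
  have hE : hermitianGram b y = E * diagonal (fun i ↦ (y (embPlace (e i)) : ℂ)) * Eᴴ := by
    ext i j
    rw [mul_apply, hermitianGram, ← e.sum_comp]
    refine Finset.sum_congr rfl fun k _ ↦ ?_
    rw [mul_diagonal, conjTranspose_apply, starRingEnd_apply]
    exact mul_left_comm _ _ _ |>.trans (mul_assoc _ _ _).symm
  have hnorm : ‖E.det‖ ^ 2 = |(Algebra.discr ℚ b : ℝ)| := by
    rw [← norm_pow, ← Algebra.discr_eq_det_embeddingsMatrixReindex_pow_two ℚ ℂ b e, eq_ratCast,
      ← Complex.ofReal_ratCast, Complex.norm_real, Real.norm_eq_abs]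
  apply ofReal_injective
  calc ((gram b y).det : ℂ) = (hermitianGram b y).det := by
        rw [← gram_map_ofReal]
        exact RingHom.map_det ofRealHom _
    _ = E.det * starRingEnd ℂ E.det * ∏ i, (y (embPlace (e i)) : ℂ) := by
        rw [hE, det_mul, det_mul, det_conjTranspose, det_diagonal, starRingEnd_apply]
        ring
    _ = _ := by
        rw [Complex.mul_conj', ← ofReal_pow, hnorm, ← ofReal_prod,
          e.prod_comp fun σ ↦ y (embPlace σ), prod_embPlace, ofReal_mul]

lemma dotProduct_gram_mulVec (b : Module.Basis ι ℚ K) (y : InfinitePlace K → ℝ) (x : ι → ℝ) :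
    x ⬝ᵥ gram b y *ᵥ x =
      ∑ σ : K →ₐ[ℚ] ℂ, y (embPlace σ) * ‖∑ i, (x i : ℂ) * σ (b i)‖ ^ 2 := by
  classical
  let E := Algebra.embeddingsMatrix ℚ ℂ b
  let z : ι → ℂ := fun i ↦ x i
  have hz : star z = z := funext fun i ↦ Complex.conj_ofReal _
  have hcast : ((x ⬝ᵥ gram b y *ᵥ x : ℝ) : ℂ) = z ⬝ᵥ hermitianGram b y *ᵥ z := by
    simp only [dotProduct, mulVec, ← gram_map_ofReal, ofReal_sum, ofReal_mul, map_apply,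
      ofRealHom_eq_coe, z]
  apply ofReal_injective
  calc ((x ⬝ᵥ gram b y *ᵥ x : ℝ) : ℂ)
      = z ᵥ* E ⬝ᵥ diagonal (fun σ ↦ (y (embPlace σ) : ℂ)) *ᵥ star (z ᵥ* E) := by
        rw [hcast, hermitianGram_eq, ← mulVec_mulVec, ← mulVec_mulVec, dotProduct_mulVec,
          star_vecMul, hz]
    _ = ∑ σ, (y (embPlace σ) : ℂ) * ‖(z ᵥ* E) σ‖ ^ 2 := by
        refine Finset.sum_congr rfl fun σ _ ↦ ?_
        rw [mulVec_diagonal, Pi.star_apply, mul_left_comm, ← Complex.mul_conj', starRingEnd_apply]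
    _ = _ := by
        push_cast
        rfl

lemma dotProduct_gram_mulVec_intCast (b : Module.Basis ι ℚ K) (y : InfinitePlace K → ℝ)
    (m : ι → ℤ) :
    (fun i ↦ (m i : ℝ)) ⬝ᵥ gram b y *ᵥ (fun i ↦ (m i : ℝ)) =
      weightedForm y (∑ i, m i • b i) := by
  rw [dotProduct_gram_mulVec, weightedForm,
    ← sum_embPlace fun v ↦ y v * v (∑ i, m i • b i) ^ 2]
  refine Finset.sum_congr rfl fun σ _ ↦ ?_
  simp only [← norm_apply_eq_embPlace, map_sum, zsmul_eq_mul, map_mul, map_intCast, ofReal_intCast]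

lemma gram_posDef {ι : Type*} [Finite ι] (b : Module.Basis ι ℚ K) {y : InfinitePlace K → ℝ}
    (hy : ∀ v, 0 < y v) : (gram b y).PosDef := by
  classical
  cases nonempty_fintype ι
  have hnonneg : (gram b y).PosSemidef := by
    refine .of_dotProduct_mulVec_nonneg (gram_isHermitian b y) fun x ↦ ?_
    rw [star_trivial, dotProduct_gram_mulVec]
    exact Finset.sum_nonneg fun σ _ ↦ mul_nonneg (hy _).le (sq_nonneg _)
  exact hnonneg.posDef_iff_isUnit.2 (.of_mul_eq_one _ (gram_mul_gram_traceDual b hy))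

lemma gaussian_gram_intCast (b : Module.Basis ι ℚ K) (y : InfinitePlace K → ℝ) (m : ι → ℤ) :
    gaussian (gram b y) (fun i ↦ (m i : ℝ)) =
      Real.exp (-Real.pi * weightedForm y (∑ i, m i • b i)) := by
  rw [gaussian, dotProduct_gram_mulVec_intCast]

lemma exists_mul_norm_sq_le_weightedForm (b : Module.Basis ι ℚ K) {y : InfinitePlace K → ℝ}
    (hy : ∀ v, 0 < y v) :
    ∃ c > 0, ∀ m : ι → ℤ, c * ‖(fun i ↦ (m i : ℝ) : ι → ℝ)‖ ^ 2 ≤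
      weightedForm y (∑ i, m i • b i) := by
  obtain ⟨c, hc, hle⟩ := exists_mul_norm_sq_le (gram_posDef b hy)
  refine ⟨c, hc, fun m ↦ ?_⟩
  rw [← dotProduct_gram_mulVec_intCast]
  exact hle _

end TraceForm

section Theta

open scoped nonZeroDivisors ENNReal

variable {ι : Type*} [Fintype ι]

lemma tsum_fractionalIdeal_eq_tsum_basis (b : Module.Basis ι ℚ K) {I : FractionalIdeal (𝓞 K)⁰ K}
    (hb : ∀ x, x ∈ Submodule.span ℤ (range b) ↔ x ∈ I) (F : K → ℝ≥0∞) :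
    ∑' a : {a : K // a ∈ I}, F a = ∑' m : ι → ℤ, F (∑ i, m i • b i) := by
  let e : (ι → ℤ) ≃ {a : K // a ∈ I} :=
    (b.restrictScalars ℤ).equivFun.symm.toEquiv.trans (Equiv.subtypeEquivRight hb)
  have he (m : ι → ℤ) : (e m : K) = ∑ i, m i • b i := by
    change (((b.restrictScalars ℤ).equivFun.symm m : Submodule.span ℤ (range b)) : K) = _
    rw [Module.Basis.equivFun_symm_apply]
    simp only [Submodule.coe_sum, Submodule.coe_smul, Module.Basis.restrictScalars_apply]
  rw [← e.tsum_eq]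
  simp only [he]

/-- The theta series `∑ exp (-π ∑ y_v |a|_v²)` of a fractional ideal. Values in `ℝ≥0∞` let sums and
integrals be exchanged before convergence is known. -/
noncomputable def idealTheta (I : FractionalIdeal (𝓞 K)⁰ K) (y : InfinitePlace K → ℝ) : ℝ≥0∞ :=
  ∑' a : {a : K // a ∈ I}, ENNReal.ofReal (Real.exp (-Real.pi * weightedForm y a))

lemma idealTheta_eq_tsum_gaussian (b : Module.Basis ι ℚ K) {I : FractionalIdeal (𝓞 K)⁰ K}
    (hb : ∀ x, x ∈ Submodule.span ℤ (range b) ↔ x ∈ I) {y : InfinitePlace K → ℝ}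
    (hy : ∀ v, 0 < y v) :
    idealTheta I y =
      ENNReal.ofReal (∑' m : ι → ℤ, gaussian (gram b y) fun i ↦ (m i : ℝ)) := by
  classical
  rw [ENNReal.ofReal_tsum_of_nonneg (fun m ↦ gaussian_nonneg _ _)
      (summable_gaussian (gram_posDef b hy)), idealTheta,
    tsum_fractionalIdeal_eq_tsum_basis b hb
      fun a ↦ ENNReal.ofReal (Real.exp (-Real.pi * weightedForm y a))]
  simp only [gaussian_gram_intCast]

lemma discr_basisOfFractionalIdeal (I : (FractionalIdeal (𝓞 K)⁰ K)ˣ) :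
    Algebra.discr ℚ (basisOfFractionalIdeal K I) =
      FractionalIdeal.absNorm I.1 ^ 2 * (discr K : ℚ) := by
  have hcard : Fintype.card (Module.Free.ChooseBasisIndex ℤ (𝓞 K)) =
      Fintype.card (Module.Free.ChooseBasisIndex ℤ I) := by
    rw [← Module.finrank_eq_card_basis (integralBasis K),
      ← Module.finrank_eq_card_basis (basisOfFractionalIdeal K I)]
  let e := Fintype.equivOfCardEq hcard
  rw [← det_basisOfFractionalIdeal_eq_absNorm K I e, sq_abs, coe_discr, Module.Basis.det_apply,
    ← Algebra.discr_reindex (A := ℚ) (basisOfFractionalIdeal K I) e.symm,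
    ← Module.Basis.coe_reindex, ← Algebra.discr_of_matrix_vecMul,
    Module.Basis.toMatrix_map_vecMul]

/-- The covolume `N(I) √|D_K|` of a fractional ideal, in the normalisation where `K ⊗ ℝ` carries
the measure self-dual for the trace form. -/
noncomputable def covol (I : (FractionalIdeal (𝓞 K)⁰ K)ˣ) : ℝ :=
  FractionalIdeal.absNorm I.1 * √|(discr K : ℝ)|

lemma sqrt_det_gram_basisOfFractionalIdeal (I : (FractionalIdeal (𝓞 K)⁰ K)ˣ)
    (y : InfinitePlace K → ℝ) :
    √(gram (basisOfFractionalIdeal K I) y).det =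
      covol I * √(∏ v : InfinitePlace K, y v ^ v.mult) := by
  have hN : (0 : ℝ) ≤ FractionalIdeal.absNorm I.1 := mod_cast FractionalIdeal.absNorm_nonneg _
  rw [det_gram (basisOfFractionalIdeal K I), discr_basisOfFractionalIdeal]
  push_cast
  rw [abs_mul, Real.sqrt_mul (by positivity), Real.sqrt_mul (by positivity), abs_pow,
    abs_of_nonneg hN, Real.sqrt_sq hN, covol]

/-- The trace dual of a fractional ideal, as an invertible fractional ideal. -/
noncomputable def dualIdeal (I : (FractionalIdeal (𝓞 K)⁰ K)ˣ) : (FractionalIdeal (𝓞 K)⁰ K)ˣ :=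
  Units.mk0 (FractionalIdeal.dual ℤ ℚ I.1) (FractionalIdeal.dual_ne_zero ℤ ℚ I.ne_zero)

lemma mem_span_traceDual_basisOfFractionalIdeal (I : (FractionalIdeal (𝓞 K)⁰ K)ˣ) (x : K) :
    x ∈ Submodule.span ℤ (range (basisOfFractionalIdeal K I).traceDual) ↔
      x ∈ (dualIdeal I).1 := by
  rw [← Submodule.traceDual_span_of_basis ℤ (B := 𝓞 K) (I := (I.1 : Submodule (𝓞 K) K))
    (basisOfFractionalIdeal K I) (by ext; exact (mem_span_basisOfFractionalIdeal K).symm),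
    dualIdeal, Units.val_mk0, ← FractionalIdeal.mem_coe,
    FractionalIdeal.coe_dual ℤ ℚ (Units.ne_zero I)]
  rfl

lemma idealTheta_eq_covol_mul_idealTheta_dual (I : (FractionalIdeal (𝓞 K)⁰ K)ˣ)
    {y : InfinitePlace K → ℝ} (hy : ∀ v, 0 < y v) :
    idealTheta I.1 y =
      ENNReal.ofReal (covol I * √(∏ v : InfinitePlace K, y v ^ v.mult))⁻¹ *
        idealTheta (dualIdeal I).1 y⁻¹ := by
  let b := basisOfFractionalIdeal K I
  have hcovol : 0 ≤ covol I * √(∏ v : InfinitePlace K, y v ^ v.mult) := by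
    rw [← sqrt_det_gram_basisOfFractionalIdeal]
    exact Real.sqrt_nonneg _
  rw [idealTheta_eq_tsum_gaussian b (fun _ ↦ mem_span_basisOfFractionalIdeal K) hy,
    idealTheta_eq_tsum_gaussian b.traceDual (mem_span_traceDual_basisOfFractionalIdeal I)
      (show ∀ v, 0 < y⁻¹ v from fun v ↦ inv_pos.2 (hy v)),
    tsum_gaussian (gram_posDef b hy), gram_inv b hy, sqrt_det_gram_basisOfFractionalIdeal,
    ENNReal.ofReal_mul (inv_nonneg.2 hcovol)]

lemma absNorm_dualIdeal (I : (FractionalIdeal (𝓞 K)⁰ K)ˣ) :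
    FractionalIdeal.absNorm (dualIdeal I).1 =
      (FractionalIdeal.absNorm I.1)⁻¹ * |(discr K : ℚ)|⁻¹ := by
  rw [dualIdeal, Units.val_mk0, FractionalIdeal.dual_eq_mul_inv, map_mul, map_inv₀, mul_comm,
    ← inv_inv (FractionalIdeal.dual ℤ ℚ 1), ← coeIdeal_differentIdeal ℤ ℚ K (𝓞 K), map_inv₀,
    FractionalIdeal.coeIdeal_absNorm, absNorm_differentIdeal K, Nat.cast_natAbs, Int.cast_abs]

end Theta

section LogSpace

open scoped nonZeroDivisors ENNReal Pointwise
open _root_.NumberField.Units (logEmbedding unitLattice basisUnitLattice)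
open Units.dirichletUnitTheorem

open Classical in
/-- The parametrisation of the trace-zero hyperplane `∑ mult v * t v = 0` by the logarithmic space,
which omits the place `w₀`. The factor `2` makes `log |ε|_v²` the coordinates of a unit `ε`. -/
noncomputable def logCoord : logSpace K →ₗ[ℝ] (InfinitePlace K → ℝ) where
  toFun h v := if hv : v = w₀ then -2 * (∑ w, h w) / v.mult else 2 * h ⟨v, hv⟩ / v.mult
  map_add' h h' := by
    ext v
    by_cases hv : v = w₀
    · simp only [hv, dite_true, Pi.add_apply, Finset.sum_add_distrib]
      ring
    · simp only [hv, dite_false, Pi.add_apply]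
      ring
  map_smul' c h := by
    ext v
    by_cases hv : v = w₀
    · simp only [hv, dite_true, Pi.smul_apply, smul_eq_mul, ← Finset.mul_sum, RingHom.id_apply]
      ring
    · simp only [hv, dite_false, Pi.smul_apply, smul_eq_mul, RingHom.id_apply]
      ring

open Classical in
lemma mult_mul_logCoord_w₀ (h : logSpace K) :
    (w₀ : InfinitePlace K).mult * logCoord h w₀ = -2 * ∑ w, h w := by
  simp only [logCoord, LinearMap.coe_mk, AddHom.coe_mk, dite_true]
  exact mul_div_cancel₀ _ InfinitePlace.mult_coe_ne_zero

lemma mult_mul_logCoord_of_ne (h : logSpace K) (w : {w : InfinitePlace K // w ≠ w₀}) :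
    w.1.mult * logCoord h w.1 = 2 * h w := by
  classical
  simp only [logCoord, LinearMap.coe_mk, AddHom.coe_mk, w.2, dite_false]
  exact mul_div_cancel₀ _ InfinitePlace.mult_coe_ne_zero

lemma sum_mult_mul_logCoord (h : logSpace K) :
    ∑ v : InfinitePlace K, v.mult * logCoord h v = 0 := by
  classical
  rw [Fintype.sum_eq_add_sum_subtype_ne _ (w₀ : InfinitePlace K)]
  simp only [mult_mul_logCoord_w₀, mult_mul_logCoord_of_ne, ← Finset.mul_sum]
  ring

lemma logCoord_logEmbedding (ε : (𝓞 K)ˣ) (v : InfinitePlace K) :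
    logCoord (logEmbedding K (Additive.ofMul ε)) v = 2 * Real.log (v (ε : K)) := by
  classical
  refine mul_left_cancel₀ (InfinitePlace.mult_coe_ne_zero (w := v)) ?_
  by_cases hv : v = w₀
  · rw [hv, mult_mul_logCoord_w₀, sum_logEmbedding_component]
    ring
  · rw [mult_mul_logCoord_of_ne _ ⟨v, hv⟩, logEmbedding_component]
    ring

lemma continuous_logCoord : Continuous (logCoord : logSpace K →ₗ[ℝ] _) :=
  LinearMap.continuous_of_finiteDimensional _

/-- The positive weights with geometric mean `x` and logarithmic position `h`. -/
noncomputable def weight (x : ℝ) (h : logSpace K) (v : InfinitePlace K) : ℝ :=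
  x * Real.exp (logCoord h v)

lemma weight_pos {x : ℝ} (hx : 0 < x) (h : logSpace K) (v : InfinitePlace K) :
    0 < weight x h v :=
  mul_pos hx (Real.exp_pos _)

lemma inv_weight (x : ℝ) (h : logSpace K) : (weight x h)⁻¹ = weight x⁻¹ (-h) := by
  ext v
  rw [Pi.inv_apply, weight, weight, mul_inv, map_neg, Pi.neg_apply, Real.exp_neg]

lemma prod_weight_pow_mult (x : ℝ) (h : logSpace K) :
    ∏ v, weight x h v ^ v.mult = x ^ Module.finrank ℚ K := by
  simp only [weight, mul_pow, ← Real.exp_nat_mul]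
  rw [Finset.prod_mul_distrib, Finset.prod_pow_eq_pow_sum, ← Real.exp_sum, sum_mult_mul_logCoord,
    Real.exp_zero, mul_one, InfinitePlace.sum_mult_eq]

lemma continuous_weightedForm_weight (a : K) :
    Continuous fun p : ℝ × logSpace K ↦ weightedForm (weight p.1 p.2) a := by
  unfold weightedForm weight
  have hcoord (v : InfinitePlace K) : Continuous fun p : ℝ × logSpace K ↦ logCoord p.2 v :=
    (continuous_apply v).comp (continuous_logCoord.comp continuous_snd)
  fun_prop

lemma weightedForm_unit_mul (x : ℝ) (h : logSpace K) (ε : (𝓞 K)ˣ) (a : K) :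
    weightedForm (weight x h) (ε * a) =
      weightedForm (weight x (logEmbedding K (Additive.ofMul ε) + h)) a := by
  refine Finset.sum_congr rfl fun v _ ↦ ?_
  have hε : 0 < v (ε : K) := v.pos_iff.2 ε.coe_ne_zero
  rw [weight, weight, map_add, Pi.add_apply, Real.exp_add, logCoord_logEmbedding, two_mul,
    Real.exp_add, Real.exp_log hε, map_mul]
  ring

open Classical in
/-- The bounded fundamental domain of the unit lattice spanned by the system of fundamental
units. -/
def unitDomain (K : Type*) [Field K] [NumberField K] : Set (logSpace K) :=
  ZSpan.fundamentalDomain ((basisUnitLattice K).ofZLatticeBasis ℝ)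

open Classical in
lemma measurableSet_unitDomain : MeasurableSet (unitDomain K) :=
  ZSpan.fundamentalDomain_measurableSet _

open Classical in
lemma isBounded_unitDomain : Bornology.IsBounded (unitDomain K) :=
  ZSpan.fundamentalDomain_isBounded _

open Classical in
lemma isAddFundamentalDomain_unitDomain :
    IsAddFundamentalDomain (unitLattice K) (unitDomain K) :=
  ZLattice.isAddFundamentalDomain (basisUnitLattice K) _

open Classical in
lemma isAddFundamentalDomain_neg_unitDomain :
    IsAddFundamentalDomain (unitLattice K) (-unitDomain K) :=
  isAddFundamentalDomain_unitDomain.preimage_of_equiv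
    (Measure.measurePreserving_neg volume).quasiMeasurePreserving
    (Equiv.neg (unitLattice K)).bijective fun g h ↦ by
      simp only [Equiv.neg_apply, Submodule.vadd_def, vadd_eq_add, NegMemClass.coe_neg]
      abel

open Classical in
instance : VAddInvariantMeasure (unitLattice K) (logSpace K) volume :=
  inferInstanceAs <| VAddInvariantMeasure (unitLattice K).toAddSubgroup _ _

lemma exists_logEmbedding_eq (g : unitLattice K) :
    ∃ ε : (𝓞 K)ˣ, logEmbedding K (Additive.ofMul ε) = g := by
  obtain ⟨ε, -, hε⟩ := g.2
  exact ⟨ε.toMul, hε⟩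

lemma idealTheta_weight_vadd (I : FractionalIdeal (𝓞 K)⁰ K) (x : ℝ) (g : unitLattice K)
    (h : logSpace K) : idealTheta I (weight x (g +ᵥ h)) = idealTheta I (weight x h) := by
  obtain ⟨ε, hε⟩ := exists_logEmbedding_eq g
  let e : {a : K // a ∈ I} ≃ {a : K // a ∈ I} :=
    (MulAction.toPerm ε).subtypeEquiv fun _ ↦ (Submodule.smul_mem_iff' I.coeToSubmodule ε).symm
  rw [idealTheta, idealTheta]
  refine (tsum_congr fun a ↦ ?_).trans (e.tsum_eq _)
  have he : (e a : K) = ε * a := Algebra.smul_def (ε : 𝓞 K) (a : K)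
  rw [he, weightedForm_unit_mul, hε, Submodule.vadd_def, vadd_eq_add]

/-- The theta series of a fractional ideal without its constant term `1`. -/
noncomputable def idealTheta₀ (I : FractionalIdeal (𝓞 K)⁰ K) (y : InfinitePlace K → ℝ) : ℝ≥0∞ :=
  ∑' a : {a : K // a ∈ I ∧ a ≠ 0}, ENNReal.ofReal (Real.exp (-Real.pi * weightedForm y a))

lemma tsum_subtype_eq_add_tsum_ne_zero {X : Type*} [Zero X] {p : X → Prop} (hp : p 0)
    (F : X → ℝ≥0∞) :
    ∑' a : {a // p a}, F a = F 0 + ∑' a : {a // p a ∧ a ≠ 0}, F a := by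
  classical
  calc ∑' a : {a // p a}, F a = ∑' a, indicator {a | p a} F a := tsum_subtype _ F
    _ = F 0 + ∑' a, indicator {a | p a ∧ a ≠ 0} F a := by
      rw [ENNReal.tsum_eq_add_tsum_ite 0, indicator_of_mem (show 0 ∈ {a | p a} from hp)]
      congr 2 with a
      by_cases ha : a = 0 <;> simp [indicator, ha]
    _ = F 0 + ∑' a : {a // p a ∧ a ≠ 0}, F a :=
      congrArg _ (tsum_subtype {a | p a ∧ a ≠ 0} F).symm

lemma idealTheta_eq_one_add (I : FractionalIdeal (𝓞 K)⁰ K) (y : InfinitePlace K → ℝ) :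
    idealTheta I y = 1 + idealTheta₀ I y := by
  rw [idealTheta, idealTheta₀, tsum_subtype_eq_add_tsum_ne_zero I.zero_mem
    fun a ↦ ENNReal.ofReal (Real.exp (-Real.pi * weightedForm y a))]
  simp [weightedForm]

instance : Countable K :=
  (Module.finBasis ℚ K).equivFun.toEquiv.injective.countable

lemma measurable_idealTheta₀_weight (I : FractionalIdeal (𝓞 K)⁰ K) :
    Measurable fun p : ℝ × logSpace K ↦ idealTheta₀ I (weight p.1 p.2) :=
  Measurable.tsum fun a ↦ by
    have := (continuous_weightedForm_weight (a : K)).measurable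
    fun_prop

lemma measurable_idealTheta_weight (I : FractionalIdeal (𝓞 K)⁰ K) (x : ℝ) :
    Measurable fun h : logSpace K ↦ idealTheta I (weight x h) := by
  simp only [idealTheta_eq_one_add]
  exact ((measurable_idealTheta₀_weight I).comp measurable_prodMk_left).const_add 1

open Classical in
/-- The theta series of a fractional ideal at scale `x`, averaged over the unit domain. -/
noncomputable def thetaIntegral (I : FractionalIdeal (𝓞 K)⁰ K) (x : ℝ) : ℝ≥0∞ :=
  ∫⁻ h in unitDomain K, idealTheta I (weight x h)

open Classical in
/-- The averaged theta series without its constant term. -/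
noncomputable def thetaIntegral₀ (I : FractionalIdeal (𝓞 K)⁰ K) (x : ℝ) : ℝ≥0∞ :=
  ∫⁻ h in unitDomain K, idealTheta₀ I (weight x h)

open Classical in
lemma thetaIntegral_eq_volume_add (I : FractionalIdeal (𝓞 K)⁰ K) (x : ℝ) :
    thetaIntegral I x = volume (unitDomain K) + thetaIntegral₀ I x := by
  simp only [thetaIntegral, thetaIntegral₀, idealTheta_eq_one_add]
  rw [lintegral_add_left measurable_const, setLIntegral_const, one_mul]

open Classical in
lemma thetaIntegral_eq_setLIntegral_neg (I : FractionalIdeal (𝓞 K)⁰ K) (x : ℝ) :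
    thetaIntegral I x = ∫⁻ h in unitDomain K, idealTheta I (weight x (-h)) := by
  rw [thetaIntegral, isAddFundamentalDomain_unitDomain.setLIntegral_eq
      isAddFundamentalDomain_neg_unitDomain _ (idealTheta_weight_vadd I x),
    ← (Measure.measurePreserving_neg volume).setLIntegral_comp_preimage
      measurableSet_unitDomain.neg (measurable_idealTheta_weight I x)]
  simp

lemma thetaIntegral_inv (I : (FractionalIdeal (𝓞 K)⁰ K)ˣ) {x : ℝ} (hx : 0 < x) :
    thetaIntegral I.1 x⁻¹ =
      ENNReal.ofReal ((covol I)⁻¹ * x ^ ((Module.finrank ℚ K : ℝ) / 2)) *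
        thetaIntegral (dualIdeal I).1 x := by
  have hsqrt : (√(x⁻¹ ^ Module.finrank ℚ K))⁻¹ = x ^ ((Module.finrank ℚ K : ℝ) / 2) := by
    rw [inv_pow, Real.sqrt_inv, inv_inv, Real.sqrt_eq_rpow, ← Real.rpow_natCast,
      ← Real.rpow_mul hx.le, mul_one_div]
  have hpoint (h : logSpace K) : idealTheta I.1 (weight x⁻¹ h) =
      ENNReal.ofReal ((covol I)⁻¹ * x ^ ((Module.finrank ℚ K : ℝ) / 2)) *
        idealTheta (dualIdeal I).1 (weight x (-h)) := by
    rw [idealTheta_eq_covol_mul_idealTheta_dual I (weight_pos (inv_pos.2 hx) h), inv_weight,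
      inv_inv, prod_weight_pow_mult, mul_inv, hsqrt]
  rw [thetaIntegral, thetaIntegral_eq_setLIntegral_neg]
  simp only [hpoint]
  exact lintegral_const_mul _ ((measurable_idealTheta_weight _ x).comp measurable_neg)

end LogSpace

section Decay

open scoped nonZeroDivisors ENNReal Topology
open Units.dirichletUnitTheorem

lemma weightedForm_mono {y y' : InfinitePlace K → ℝ} (h : ∀ v, y v ≤ y' v) (a : K) :
    weightedForm y a ≤ weightedForm y' a := by
  unfold weightedForm
  gcongr with v
  exact h v

lemma weightedForm_const_mul_one (c : ℝ) (a : K) :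
    weightedForm (fun _ ↦ c) a = c * weightedForm 1 a := by
  simp only [weightedForm, Finset.mul_sum, Pi.one_apply]
  exact Finset.sum_congr rfl fun v _ ↦ by ring

lemma weightedForm_pos {y : InfinitePlace K → ℝ} (hy : ∀ v, 0 < y v) {a : K} (ha : a ≠ 0) :
    0 < weightedForm y a :=
  Finset.sum_pos (fun v _ ↦ mul_pos (by exact_mod_cast v.mult_pos)
    (mul_pos (hy v) (pow_pos (v.pos_iff.2 ha) 2))) Finset.univ_nonempty

lemma exists_le_logCoord_unitDomain :
    ∃ R : ℝ, ∀ h ∈ unitDomain K, ∀ v, R ≤ logCoord h v := by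
  classical
  obtain ⟨B, hB⟩ := (isBounded_unitDomain (K := K)).exists_norm_le
  let L := (logCoord (K := K)).toContinuousLinearMap
  refine ⟨-(‖L‖ * B), fun h hh v ↦ ?_⟩
  have hnorm : ‖L h‖ ≤ ‖L‖ * B := (L.le_opNorm h).trans (by gcongr; exact hB h hh)
  exact (abs_le.1 ((norm_le_pi_norm (L h) v).trans hnorm)).1

lemma tsum_inv_weightedForm_one_pow_ne_top (I : (FractionalIdeal (𝓞 K)⁰ K)ˣ) {k : ℕ}
    (hk : Module.finrank ℚ K < 2 * k) :
    ∑' a : {a : K // a ∈ I.1 ∧ a ≠ 0}, ENNReal.ofReal (weightedForm 1 (a : K) ^ k)⁻¹ ≠ ⊤ := by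
  let b := basisOfFractionalIdeal K I
  let F : K → ℝ≥0∞ := fun a ↦ ENNReal.ofReal (weightedForm 1 a ^ k)⁻¹
  have hF : F 0 = 0 := by simp [F, weightedForm, show k ≠ 0 by omega]
  have hF_sum : ∑' a : {a : K // a ∈ I.1 ∧ a ≠ 0}, F a =
      ∑' m : Module.Free.ChooseBasisIndex ℤ I → ℤ, F (∑ i, m i • b i) := by
    rw [← tsum_fractionalIdeal_eq_tsum_basis b fun _ ↦ mem_span_basisOfFractionalIdeal K,
      tsum_subtype_eq_add_tsum_ne_zero I.1.zero_mem, hF, zero_add]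
  obtain ⟨c, hc, hle⟩ := exists_mul_norm_sq_le_weightedForm b (y := 1) fun _ ↦ one_pos
  have hsum := summable_norm_intCast_rpow (ι := Module.Free.ChooseBasisIndex ℤ I)
    (r := -(2 * k : ℕ)) <| neg_lt_neg <| by
      rw [← Module.finrank_eq_card_basis b]
      exact_mod_cast hk
  refine ne_top_of_le_ne_top (hsum.mul_left (c ^ k)⁻¹).tsum_ofReal_ne_top
    (hF_sum.trans_le (ENNReal.tsum_le_tsum fun m ↦ ?_))
  rcases eq_or_ne m 0 with rfl | hm
  · simp [hF]
  · have hnorm : 0 < ‖(fun i ↦ (m i : ℝ) : _ → ℝ)‖ := norm_pos_iff.2 fun h ↦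
      hm (funext fun i ↦ Int.cast_eq_zero.1 (congrFun h i))
    rw [Real.rpow_neg hnorm.le, Real.rpow_natCast, pow_mul, ← mul_inv, ← mul_pow]
    exact ENNReal.ofReal_le_ofReal (by gcongr; exact hle m)

lemma exp_neg_pi_mul_le {t : ℝ} (ht : 0 < t) (k : ℕ) :
    Real.exp (-Real.pi * t) ≤ k.factorial * (t ^ k)⁻¹ := by
  calc Real.exp (-Real.pi * t) ≤ (Real.exp t)⁻¹ := by
        rw [← Real.exp_neg]
        exact Real.exp_le_exp.2 (by nlinarith [Real.pi_gt_three])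
    _ ≤ (t ^ k / k.factorial)⁻¹ := by
        gcongr
        exact Real.pow_div_factorial_le_exp t ht.le k
    _ = k.factorial * (t ^ k)⁻¹ := by rw [inv_div, div_eq_mul_inv]

lemma exists_idealTheta₀_weight_le (I : (FractionalIdeal (𝓞 K)⁰ K)ˣ) (R : ℝ) {k : ℕ}
    (hk : Module.finrank ℚ K < 2 * k) :
    ∃ C ≠ ⊤, ∀ x > 0, ∀ h : logSpace K, (∀ v, R ≤ logCoord h v) →
      idealTheta₀ I.1 (weight x h) ≤ C * ENNReal.ofReal (x ^ k)⁻¹ := by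
  refine ⟨ENNReal.ofReal (k.factorial * (Real.exp R ^ k)⁻¹) * _,
    ENNReal.mul_ne_top ENNReal.ofReal_ne_top (tsum_inv_weightedForm_one_pow_ne_top I hk),
    fun x hx h hR ↦ ?_⟩
  rw [mul_right_comm, ← ENNReal.ofReal_mul (by positivity), ← ENNReal.tsum_mul_left]
  refine ENNReal.tsum_le_tsum fun a ↦ ?_
  have hone : 0 < weightedForm 1 (a : K) := weightedForm_pos (fun _ ↦ one_pos) a.2.2
  have hlow : x * Real.exp R * weightedForm 1 (a : K) ≤ weightedForm (weight x h) a := by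
    rw [← weightedForm_const_mul_one]
    exact weightedForm_mono (fun v ↦ by unfold weight; gcongr; exact hR v) _
  rw [← ENNReal.ofReal_mul (by positivity)]
  refine ENNReal.ofReal_le_ofReal ?_
  calc Real.exp (-Real.pi * weightedForm (weight x h) a)
      ≤ k.factorial * (weightedForm (weight x h) a ^ k)⁻¹ :=
        exp_neg_pi_mul_le (weightedForm_pos (weight_pos hx h) a.2.2) k
    _ ≤ k.factorial * ((x * Real.exp R * weightedForm 1 (a : K)) ^ k)⁻¹ := by gcongr
    _ = _ := by
        rw [mul_pow, mul_pow, mul_inv, mul_inv]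
        ring

lemma exists_thetaIntegral₀_le (I : (FractionalIdeal (𝓞 K)⁰ K)ˣ) {k : ℕ}
    (hk : Module.finrank ℚ K < 2 * k) :
    ∃ C ≠ ⊤, ∀ x > 0, thetaIntegral₀ I.1 x ≤ C * ENNReal.ofReal (x ^ k)⁻¹ := by
  classical
  obtain ⟨R, hR⟩ := exists_le_logCoord_unitDomain (K := K)
  obtain ⟨C, hC, hle⟩ := exists_idealTheta₀_weight_le I R hk
  refine ⟨C * volume (unitDomain K),
    ENNReal.mul_ne_top hC isBounded_unitDomain.measure_lt_top.ne, fun x hx ↦ ?_⟩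
  calc thetaIntegral₀ I.1 x ≤ ∫⁻ _ in unitDomain K, C * ENNReal.ofReal (x ^ k)⁻¹ :=
        setLIntegral_mono' measurableSet_unitDomain fun h hh ↦ hle x hx h (hR h hh)
    _ = C * volume (unitDomain K) * ENNReal.ofReal (x ^ k)⁻¹ := by
        rw [setLIntegral_const, mul_right_comm]

lemma thetaIntegral₀_ne_top (I : (FractionalIdeal (𝓞 K)⁰ K)ˣ) {x : ℝ} (hx : 0 < x) :
    thetaIntegral₀ I.1 x ≠ ⊤ := by
  obtain ⟨C, hC, hle⟩ := exists_thetaIntegral₀_le I (k := Module.finrank ℚ K + 1) (by lia)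
  exact ne_top_of_le_ne_top (ENNReal.mul_ne_top hC ENNReal.ofReal_ne_top) (hle x hx)

lemma thetaIntegral_ne_top (I : (FractionalIdeal (𝓞 K)⁰ K)ˣ) {x : ℝ} (hx : 0 < x) :
    thetaIntegral I.1 x ≠ ⊤ := by
  classical
  rw [thetaIntegral_eq_volume_add]
  exact ENNReal.add_ne_top.2
    ⟨isBounded_unitDomain.measure_lt_top.ne, thetaIntegral₀_ne_top I hx⟩

lemma antitone_thetaIntegral (I : FractionalIdeal (𝓞 K)⁰ K) : Antitone (thetaIntegral I) := by
  intro x x' hx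
  refine lintegral_mono fun h ↦ ENNReal.tsum_le_tsum fun a ↦
    ENNReal.ofReal_le_ofReal (Real.exp_le_exp.2 ?_)
  refine mul_le_mul_of_nonpos_left (weightedForm_mono (fun v ↦ ?_) _)
    (neg_nonpos.2 Real.pi_pos.le)
  unfold weight
  gcongr

/-- The averaged theta function of a fractional ideal, complex-valued as required for functional
equations of Mellin transforms. -/
noncomputable def complexTheta (I : (FractionalIdeal (𝓞 K)⁰ K)ˣ) (x : ℝ) : ℂ :=
  (thetaIntegral I.1 x).toReal

lemma locallyIntegrableOn_complexTheta (I : (FractionalIdeal (𝓞 K)⁰ K)ˣ) :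
    LocallyIntegrableOn (complexTheta I) (Ioi 0) := by
  rw [locallyIntegrableOn_iff isOpen_Ioi.isLocallyClosed]
  intro k hk hk_compact
  have hanti : AntitoneOn (fun x ↦ (thetaIntegral I.1 x).toReal) k := fun x hx x' _ hxx' ↦
    ENNReal.toReal_mono (thetaIntegral_ne_top I (hk hx)) (antitone_thetaIntegral _ hxx')
  exact (hanti.integrableOn_isCompact hk_compact).ofReal

open Classical in
lemma complexTheta_sub_volume (I : (FractionalIdeal (𝓞 K)⁰ K)ˣ) {x : ℝ} (hx : 0 < x) :
    complexTheta I x - ((volume (unitDomain K)).toReal : ℂ) = (thetaIntegral₀ I.1 x).toReal := by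
  rw [complexTheta, thetaIntegral_eq_volume_add,
    ENNReal.toReal_add isBounded_unitDomain.measure_lt_top.ne (thetaIntegral₀_ne_top I hx),
    ofReal_add, add_sub_cancel_left]

open Classical in
lemma complexTheta_sub_volume_isBigO (I : (FractionalIdeal (𝓞 K)⁰ K)ˣ) (r : ℝ) :
    (complexTheta I · - ((volume (unitDomain K)).toReal : ℂ)) =O[Filter.atTop] (· ^ r) := by
  obtain ⟨m, hm⟩ := exists_nat_ge (-r)
  obtain ⟨C, hC, hle⟩ :=
    exists_thetaIntegral₀_le I (k := m + Module.finrank ℚ K + 1) (by lia)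
  refine Asymptotics.IsBigO.of_bound C.toReal ?_
  filter_upwards [Filter.eventually_ge_atTop 1] with x hx
  have hx0 : 0 < x := one_pos.trans_le hx
  have hle' := ENNReal.toReal_mono (ENNReal.mul_ne_top hC ENNReal.ofReal_ne_top) (hle x hx0)
  rw [ENNReal.toReal_mul, ENNReal.toReal_ofReal (by positivity)] at hle'
  rw [complexTheta_sub_volume I hx0, Complex.norm_real,
    Real.norm_of_nonneg ENNReal.toReal_nonneg, Real.norm_of_nonneg (by positivity)]
  refine hle'.trans ?_
  rw [← Real.rpow_natCast, ← Real.rpow_neg hx0.le]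
  gcongr
  push_cast
  linarith [(Nat.cast_nonneg (Module.finrank ℚ K) : (0 : ℝ) ≤ _)]

lemma absNorm_pos (I : (FractionalIdeal (𝓞 K)⁰ K)ˣ) :
    0 < FractionalIdeal.absNorm I.1 :=
  (FractionalIdeal.absNorm_nonneg _).lt_of_ne'
    (FractionalIdeal.absNorm_eq_zero_iff.not.2 I.ne_zero)

lemma covol_pos (I : (FractionalIdeal (𝓞 K)⁰ K)ˣ) : 0 < covol I :=
  mul_pos (mod_cast absNorm_pos I)
    (Real.sqrt_pos.2 (abs_pos.2 (mod_cast discr_ne_zero K)))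

lemma dualIdeal_dualIdeal (I : (FractionalIdeal (𝓞 K)⁰ K)ˣ) : dualIdeal (dualIdeal I) = I :=
  Units.ext (FractionalIdeal.dual_dual ℤ ℚ _)

lemma covol_dualIdeal (I : (FractionalIdeal (𝓞 K)⁰ K)ˣ) :
    covol (dualIdeal I) = (covol I)⁻¹ := by
  rw [covol, covol, absNorm_dualIdeal, mul_inv]
  push_cast
  rw [mul_assoc, ← Real.sqrt_div_self, div_eq_mul_inv, inv_mul_eq_div, div_eq_mul_inv]
  ring

open Classical in
/-- The functional equation relating the theta functions of a fractional ideal and its dual. -/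
noncomputable def thetaPair (I : (FractionalIdeal (𝓞 K)⁰ K)ˣ) : WeakFEPair ℂ where
  f := complexTheta I
  g := complexTheta (dualIdeal I)
  k := (Module.finrank ℚ K : ℝ) / 2
  ε := ((covol I)⁻¹ : ℝ)
  f₀ := (volume (unitDomain K)).toReal
  g₀ := (volume (unitDomain K)).toReal
  hf_int := locallyIntegrableOn_complexTheta I
  hg_int := locallyIntegrableOn_complexTheta (dualIdeal I)
  hk := half_pos (Nat.cast_pos.2 Module.finrank_pos)
  hε := ofReal_ne_zero.2 (inv_ne_zero (covol_pos I).ne')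
  h_feq x hx := by
    have hpos : 0 ≤ (covol I)⁻¹ * x ^ ((Module.finrank ℚ K : ℝ) / 2) :=
      mul_nonneg (inv_nonneg.2 (covol_pos I).le) (Real.rpow_nonneg (mem_Ioi.1 hx).le _)
    rw [complexTheta, one_div, thetaIntegral_inv I hx, ENNReal.toReal_mul,
      ENNReal.toReal_ofReal hpos, complexTheta, smul_eq_mul, ofReal_mul, ofReal_mul]
  hf_top := complexTheta_sub_volume_isBigO I
  hg_top := complexTheta_sub_volume_isBigO (dualIdeal I)

lemma thetaPair_symm (I : (FractionalIdeal (𝓞 K)⁰ K)ˣ) :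
    (thetaPair I).symm = thetaPair (dualIdeal I) := by
  simp only [WeakFEPair.symm, thetaPair, dualIdeal_dualIdeal, covol_dualIdeal, ofReal_inv]

end Decay

section Mellin

open scoped nonZeroDivisors ENNReal NNReal Pointwise
open _root_.NumberField.Units (logEmbedding logEmbeddingEquiv unitLattice torsion torsionOrder)
open Units.dirichletUnitTheorem

lemma setLIntegral_Ioi_eq_lintegral_exp (f : ℝ → ℝ≥0∞) :
    ∫⁻ x in Ioi 0, f x = ∫⁻ t, ENNReal.ofReal (Real.exp t) * f (Real.exp t) := by
  have himage := lintegral_image_eq_lintegral_abs_deriv_mul MeasurableSet.univ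
    (fun t _ ↦ (Real.hasDerivAt_exp t).hasDerivWithinAt) Real.exp_injective.injOn f
  simpa only [image_univ, Real.range_exp, Real.abs_exp, setLIntegral_univ] using himage

lemma lintegral_exp_neg_mul_exp_mul_exp {a r : ℝ} (ha : 0 < a) (hr : 0 < r) :
    ∫⁻ t, ENNReal.ofReal (Real.exp (-r * Real.exp t) * Real.exp (a * t)) =
      ENNReal.ofReal ((1 / r) ^ a * Real.Gamma a) := by
  have hpos : 0 < (1 / r) ^ a * Real.Gamma a := by
    have := Real.Gamma_pos_of_pos ha
    positivity
  have hGamma := Real.integral_rpow_mul_exp_neg_mul_Ioi ha hr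
  have hint : IntegrableOn (fun x ↦ x ^ (a - 1) * Real.exp (-(r * x))) (Ioi 0) :=
    not_imp_comm.1 integral_undef (hGamma.trans_ne hpos.ne')
  rw [← hGamma, ofReal_integral_eq_lintegral_ofReal hint <|
      ae_restrict_of_forall_mem measurableSet_Ioi fun x (hx : 0 < x) ↦ by positivity,
    setLIntegral_Ioi_eq_lintegral_exp]
  refine lintegral_congr fun t ↦ ?_
  rw [← ENNReal.ofReal_mul (Real.exp_pos _).le, Real.rpow_def_of_pos (Real.exp_pos _),
    Real.log_exp, ← Real.exp_add, ← Real.exp_add, ← Real.exp_add]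
  ring_nf

lemma lintegral_fintype_prod_ofReal {ι : Type*} [Fintype ι] {f : ι → ℝ → ℝ} {c : ι → ℝ}
    (hm : ∀ i, Measurable (f i)) (hf : ∀ i t, 0 ≤ f i t) (hc : ∀ i, 0 ≤ c i)
    (hfc : ∀ i, ∫⁻ t, ENNReal.ofReal (f i t) = ENNReal.ofReal (c i)) :
    ∫⁻ u : ι → ℝ, ENNReal.ofReal (∏ i, f i (u i)) = ENNReal.ofReal (∏ i, c i) := by
  have hint (i : ι) : Integrable (f i) := by
    refine ⟨(hm i).aestronglyMeasurable, ?_⟩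
    rw [hasFiniteIntegral_iff_ofReal (ae_of_all _ (hf i)), hfc]
    exact ENNReal.ofReal_lt_top
  have hprod : Integrable fun u : ι → ℝ ↦ ∏ i, f i (u i) := Integrable.fintype_prod hint
  rw [← ofReal_integral_eq_lintegral_ofReal hprod
      (ae_of_all _ fun u ↦ Finset.prod_nonneg fun i _ ↦ hf i _),
    integral_fintype_prod_volume_eq_prod]
  congr 1
  refine Finset.prod_congr rfl fun i _ ↦ ?_
  rw [integral_eq_lintegral_of_nonneg_ae (ae_of_all _ (hf i)) (hm i).aestronglyMeasurable, hfc,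
    ENNReal.toReal_ofReal (hc i)]

/-- The linear coordinates `(h, t) ↦ log (weight (exp t) h)`. -/
noncomputable def logPolar : (logSpace K × ℝ) →ₗ[ℝ] (InfinitePlace K → ℝ) where
  toFun p v := p.2 + logCoord p.1 v
  map_add' p q := by
    ext v
    simp only [Prod.fst_add, Prod.snd_add, map_add, Pi.add_apply]
    ring
  map_smul' c p := by
    ext v
    simp only [Prod.smul_fst, Prod.smul_snd, map_smul, Pi.smul_apply, smul_eq_mul,
      RingHom.id_apply]
    ring

lemma sum_mult_mul_logPolar (p : logSpace K × ℝ) :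
    ∑ v : InfinitePlace K, v.mult * logPolar p v = Module.finrank ℚ K * p.2 := by
  simp only [logPolar, LinearMap.coe_mk, AddHom.coe_mk, mul_add, Finset.sum_add_distrib,
    sum_mult_mul_logCoord, ← Finset.sum_mul, ← Nat.cast_sum, InfinitePlace.sum_mult_eq, add_zero]

lemma logPolar_injective : Function.Injective (logPolar (K := K)) := by
  refine (injective_iff_map_eq_zero _).2 fun p hp ↦ ?_
  have hsnd : p.2 = 0 := by
    have hsum := sum_mult_mul_logPolar p
    rw [hp] at hsum
    simpa [(Module.finrank_pos (R := ℚ) (M := K)).ne'] using hsum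
  refine Prod.ext (funext fun w ↦ ?_) hsnd
  have hw : logCoord p.1 w.1 = 0 := by
    simpa [logPolar, hsnd] using congrFun hp w.1
  simpa [hw] using (mult_mul_logCoord_of_ne p.1 w).symm

lemma finrank_logSpace_prod_real :
    Module.finrank ℝ (logSpace K × ℝ) = Module.finrank ℝ (InfinitePlace K → ℝ) := by
  classical
  rw [Module.finrank_prod, Module.finrank_self, Module.finrank_fintype_fun_eq_card,
    Module.finrank_fintype_fun_eq_card, Fintype.card_subtype_compl, Fintype.card_subtype_eq,
    Nat.sub_add_cancel Fintype.card_pos]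

/-- `logPolar` as a homeomorphism. -/
noncomputable def logPolarEquiv : (logSpace K × ℝ) ≃L[ℝ] (InfinitePlace K → ℝ) :=
  (LinearMap.linearEquivOfInjective logPolar logPolar_injective
    finrank_logSpace_prod_real).toContinuousLinearEquiv

open Classical in
instance : (volume : Measure (logSpace K × ℝ)).IsAddHaarMeasure :=
  inferInstanceAs ((volume : Measure (logSpace K)).prod (volume : Measure ℝ)).IsAddHaarMeasure

open Classical in
instance : ((volume : Measure (logSpace K × ℝ)).map logPolarEquiv).IsAddHaarMeasure :=
  logPolarEquiv.isAddHaarMeasure_map _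

open Classical in
/-- The Jacobian constant relating the Haar measures on the two sides of `logPolar`. Its value
cancels from the functional equation. -/
noncomputable def logHaarFactor (K : Type*) [Field K] [NumberField K] : ℝ≥0 :=
  Measure.addHaarScalarFactor ((volume : Measure (logSpace K × ℝ)).map logPolarEquiv) volume

open Classical in
lemma logHaarFactor_pos : 0 < logHaarFactor K :=
  Measure.addHaarScalarFactor_pos_of_isAddHaarMeasure _ _

open Classical in
lemma lintegral_lintegral_logPolar {f : (InfinitePlace K → ℝ) → ℝ≥0∞} (hf : Measurable f) :
    ∫⁻ h, ∫⁻ t, f (logPolar (h, t)) = logHaarFactor K * ∫⁻ u, f u := by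
  have hmeas : Measurable (logPolarEquiv (K := K)) := logPolarEquiv.continuous.measurable
  calc ∫⁻ h, ∫⁻ t, f (logPolar (h, t))
      = ∫⁻ p, f (logPolarEquiv p) := (lintegral_prod _ (hf.comp hmeas).aemeasurable).symm
    _ = ∫⁻ u, f u ∂((volume : Measure (logSpace K × ℝ)).map logPolarEquiv) :=
      (lintegral_map hf hmeas).symm
    _ = logHaarFactor K * ∫⁻ u, f u := by
      rw [Measure.isAddLeftInvariant_eq_smul
        ((volume : Measure (logSpace K × ℝ)).map logPolarEquiv) volume]
      exact lintegral_smul_measure _ _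

lemma tsum_comp_quotient_mk {G : Type*} [Group G] (H : Subgroup G) [Finite H]
    (F : G ⧸ H → ℝ≥0∞) : ∑' g : G, F g = Nat.card H * ∑' q, F q := by
  calc ∑' g : G, F g = ∑' p : (G ⧸ H) × H, F p.1 :=
        Subgroup.groupEquivQuotientProdSubgroup.tsum_eq fun p : (G ⧸ H) × H ↦ F p.1
    _ = Nat.card H * ∑' q, F q := by
      rw [ENNReal.tsum_prod (f := fun q _ ↦ F q), ← ENNReal.tsum_mul_left]
      simp [ENat.card_eq_coe_natCard]

lemma tsum_logEmbedding (F : logSpace K → ℝ≥0∞) :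
    ∑' ε : (𝓞 K)ˣ, F (logEmbedding K (Additive.ofMul ε)) =
      torsionOrder K * ∑' g : unitLattice K, F g := by
  simp only [← Units.logEmbeddingEquiv_apply]
  rw [tsum_comp_quotient_mk (torsion K) fun q ↦ F (logEmbeddingEquiv K (Additive.ofMul q))]
  exact congrArg _ ((Additive.ofMul.trans (logEmbeddingEquiv K).toEquiv).tsum_eq
    fun g : unitLattice K ↦ F g)

/-- The contribution of `a` to the integrand of the Mellin transform of the averaged theta series
at `n * s / 2`. -/
noncomputable def mellinKernel (s : ℝ) (a : K) (p : ℝ × logSpace K) : ℝ≥0∞ :=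
  ENNReal.ofReal (Real.exp (-Real.pi * weightedForm (weight p.1 p.2) a) *
    p.1 ^ ((Module.finrank ℚ K : ℝ) * s / 2 - 1))

lemma measurable_mellinKernel (s : ℝ) (a : K) : Measurable (mellinKernel s a) := by
  unfold mellinKernel
  have := (continuous_weightedForm_weight a).measurable
  fun_prop

/-- The contribution of `a` to the Mellin transform, as a function on the logarithmic space. -/
noncomputable def termMellin (s : ℝ) (a : K) (h : logSpace K) : ℝ≥0∞ :=
  ∫⁻ x in Ioi 0, mellinKernel s a (x, h)

/-- The Mellin transform at `n * s / 2` of the averaged theta series without constant term. -/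
noncomputable def thetaMellin (I : FractionalIdeal (𝓞 K)⁰ K) (s : ℝ) : ℝ≥0∞ :=
  ∫⁻ x in Ioi 0, thetaIntegral₀ I x *
    ENNReal.ofReal (x ^ ((Module.finrank ℚ K : ℝ) * s / 2 - 1))

open Classical in
lemma thetaIntegral₀_mul_ofReal_rpow (I : FractionalIdeal (𝓞 K)⁰ K) (s x : ℝ) :
    thetaIntegral₀ I x * ENNReal.ofReal (x ^ ((Module.finrank ℚ K : ℝ) * s / 2 - 1)) =
      ∑' a : {a : K // a ∈ I ∧ a ≠ 0}, ∫⁻ h in unitDomain K, mellinKernel s (a : K) (x, h) := by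
  have hmeas : Measurable fun h : logSpace K ↦ idealTheta₀ I (weight x h) :=
    Measurable.of_uncurry_left (f := fun x h ↦ idealTheta₀ I (weight x h))
      (measurable_idealTheta₀_weight I)
  have hkernel (a : {a : K // a ∈ I ∧ a ≠ 0}) :
      Measurable fun h : logSpace K ↦ mellinKernel s (a : K) (x, h) :=
    (measurable_mellinKernel s (a : K)).comp measurable_prodMk_left
  rw [thetaIntegral₀, ← lintegral_mul_const _ hmeas,
    ← lintegral_tsum fun a ↦ (hkernel a).aemeasurable]
  simp only [idealTheta₀, mellinKernel, ← ENNReal.tsum_mul_right,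
    ENNReal.ofReal_mul (Real.exp_pos _).le]

open Classical in
lemma thetaMellin_eq_tsum (I : FractionalIdeal (𝓞 K)⁰ K) (s : ℝ) :
    thetaMellin I s =
      ∑' a : {a : K // a ∈ I ∧ a ≠ 0}, ∫⁻ h in unitDomain K, termMellin s (a : K) h := by
  simp only [thetaMellin, thetaIntegral₀_mul_ofReal_rpow]
  rw [lintegral_tsum fun a : {a : K // a ∈ I ∧ a ≠ 0} ↦
    (measurable_mellinKernel s (a : K)).lintegral_prod_right'.aemeasurable]
  exact tsum_congr fun a ↦
    lintegral_lintegral_swap (measurable_mellinKernel s (a : K)).aemeasurable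

lemma termMellin_unit_mul (s : ℝ) (a : K) (ε : (𝓞 K)ˣ) (h : logSpace K) :
    termMellin s (ε * a) h = termMellin s a (logEmbedding K (Additive.ofMul ε) + h) := by
  simp only [termMellin, mellinKernel, weightedForm_unit_mul]

open Classical in
lemma tsum_unit_setLIntegral_termMellin (s : ℝ) (a : K) :
    ∑' ε : (𝓞 K)ˣ, ∫⁻ h in unitDomain K, termMellin s (ε * a) h =
      torsionOrder K * ∫⁻ h, termMellin s a h := by
  simp only [termMellin_unit_mul]
  rw [tsum_logEmbedding fun l ↦ ∫⁻ h in unitDomain K, termMellin s a (l + h),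
    isAddFundamentalDomain_unitDomain.lintegral_eq_tsum'']
  rfl

/-- The factor of the Mellin integral at a place `v` with `v a = r`, in the coordinate
`logPolar`. -/
noncomputable def placeKernel (s : ℝ) (v : InfinitePlace K) (r t : ℝ) : ℝ :=
  Real.exp (-(Real.pi * v.mult * r ^ 2) * Real.exp t) * Real.exp (v.mult * s / 2 * t)

lemma ofReal_exp_mul_mellinKernel (s : ℝ) (a : K) (h : logSpace K) (t : ℝ) :
    ENNReal.ofReal (Real.exp t) * mellinKernel s a (Real.exp t, h) =
      ENNReal.ofReal (∏ v : InfinitePlace K, placeKernel s v (v a) (logPolar (h, t) v)) := by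
  have hlin : ∑ v : InfinitePlace K, v.mult * s / 2 * logPolar (h, t) v =
      Module.finrank ℚ K * s / 2 * t := by
    calc ∑ v : InfinitePlace K, v.mult * s / 2 * logPolar (h, t) v
        = s / 2 * ∑ v : InfinitePlace K, v.mult * logPolar (h, t) v := by
          rw [Finset.mul_sum]
          exact Finset.sum_congr rfl fun v _ ↦ by ring
      _ = Module.finrank ℚ K * s / 2 * t := by
          rw [sum_mult_mul_logPolar]
          ring
  have hform : ∑ v : InfinitePlace K,
        -(Real.pi * v.mult * v a ^ 2) * Real.exp (logPolar (h, t) v) =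
      -Real.pi * weightedForm (weight (Real.exp t) h) a := by
    simp only [weightedForm, weight, logPolar, LinearMap.coe_mk, AddHom.coe_mk, Real.exp_add,
      Finset.mul_sum]
    exact Finset.sum_congr rfl fun v _ ↦ by ring
  rw [mellinKernel, ← ENNReal.ofReal_mul (Real.exp_pos _).le]
  simp only [placeKernel]
  rw [Finset.prod_mul_distrib, ← Real.exp_sum, ← Real.exp_sum, hlin, hform,
    Real.rpow_def_of_pos (Real.exp_pos _), Real.log_exp, ← Real.exp_add, ← Real.exp_add,
    ← Real.exp_add]
  ring_nf

lemma lintegral_placeKernel {k : Type*} [Field k] {s r : ℝ} (hs : 0 < s) (hr : 0 < r)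
    (v : InfinitePlace k) :
    ∫⁻ t, ENNReal.ofReal (placeKernel s v r t) =
      ENNReal.ofReal ((1 / (Real.pi * v.mult)) ^ (v.mult * s / 2) *
        Real.Gamma (v.mult * s / 2) * (r ^ v.mult) ^ (-s)) := by
  have hv : (0 : ℝ) < v.mult := by exact_mod_cast v.mult_pos
  have hpow : (1 / r ^ 2) ^ (v.mult * s / 2) = (r ^ v.mult) ^ (-s) := by
    rw [one_div, ← Real.rpow_natCast, ← Real.rpow_natCast, ← Real.rpow_neg hr.le,
      ← Real.rpow_mul hr.le, ← Real.rpow_mul hr.le]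
    congr 1
    push_cast
    ring
  simp only [placeKernel]
  rw [lintegral_exp_neg_mul_exp_mul_exp (by positivity) (by positivity), ← one_div_mul_one_div,
    Real.mul_rpow (by positivity) (by positivity), hpow]
  ring_nf

/-- The archimedean factor of the completed zeta function, up to powers of the discriminant. -/
noncomputable def archFactor (K : Type*) [Field K] [NumberField K] (s : ℝ) : ℝ :=
  ∏ v : InfinitePlace K, (1 / (Real.pi * v.mult)) ^ (v.mult * s / 2) *
    Real.Gamma (v.mult * s / 2)

lemma archFactor_pos {s : ℝ} (hs : 0 < s) : 0 < archFactor K s := by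
  refine Finset.prod_pos fun v _ ↦ ?_
  have hv : (0 : ℝ) < v.mult := by exact_mod_cast v.mult_pos
  have := Real.Gamma_pos_of_pos (show 0 < v.mult * s / 2 by positivity)
  positivity

open Classical in
lemma lintegral_termMellin {s : ℝ} (hs : 0 < s) {a : K} (ha : a ≠ 0) :
    ∫⁻ h, termMellin s a h = logHaarFactor K *
      ENNReal.ofReal (archFactor K s * |(Algebra.norm ℚ a : ℝ)| ^ (-s)) := by
  have hva (v : InfinitePlace K) : 0 < v a := v.pos_iff.2 ha
  have hnorm : |(Algebra.norm ℚ a : ℝ)| ^ (-s) =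
      ∏ v : InfinitePlace K, (v a ^ v.mult) ^ (-s) := by
    rw [Real.finsetProd_rpow _ _ fun v _ ↦ pow_nonneg (hva v).le _,
      InfinitePlace.prod_eq_abs_norm, Rat.cast_abs]
  simp only [termMellin, setLIntegral_Ioi_eq_lintegral_exp, ofReal_exp_mul_mellinKernel]
  rw [lintegral_lintegral_logPolar
      (f := fun u ↦ ENNReal.ofReal (∏ v : InfinitePlace K, placeKernel s v (v a) (u v)))
      (by unfold placeKernel; fun_prop),
    lintegral_fintype_prod_ofReal (fun v ↦ by unfold placeKernel; fun_prop)
      (fun v t ↦ by unfold placeKernel; positivity) (fun v ↦ ?_)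
      fun v ↦ lintegral_placeKernel hs (hva v) v,
    hnorm, archFactor, Finset.prod_mul_distrib]
  have hv : (0 : ℝ) < v.mult := by exact_mod_cast v.mult_pos
  have hr := hva v
  have := Real.Gamma_pos_of_pos (show 0 < v.mult * s / 2 by positivity)
  positivity

end Mellin

section IdealClasses

open scoped nonZeroDivisors ENNReal
open _root_.NumberField.Units (torsionOrder)

/-- The nonzero integral ideals, over which the Dedekind zeta series is summed. -/
abbrev NonzeroIdeal (K : Type*) [Field K] : Type _ := {I : Ideal (𝓞 K) // I ≠ ⊥}

/-- A nonzero ideal as an invertible fractional ideal. -/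
noncomputable def NonzeroIdeal.frac (A : NonzeroIdeal K) : (FractionalIdeal (𝓞 K)⁰ K)ˣ :=
  FractionalIdeal.mk0 K ⟨A, mem_nonZeroDivisors_of_ne_zero A.2⟩

lemma NonzeroIdeal.coe_frac (A : NonzeroIdeal K) :
    (A.frac : FractionalIdeal (𝓞 K)⁰ K) = (A : Ideal (𝓞 K)) :=
  FractionalIdeal.coe_mk0 K _

lemma NonzeroIdeal.frac_injective : Function.Injective (NonzeroIdeal.frac (K := K)) :=
  fun A B h ↦ Subtype.ext <| FractionalIdeal.coeIdeal_injective (K := K) <|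
    A.coe_frac.symm.trans ((congrArg Units.val h).trans B.coe_frac)

/-- The nonzero ideals whose class is inverse to that of `J`. -/
abbrev InverseClass (J : (FractionalIdeal (𝓞 K)⁰ K)ˣ) : Type _ :=
  {A : NonzeroIdeal K // ClassGroup.mk K (A.frac * J) = 1}

lemma exists_spanSingleton_eq_mul {J : (FractionalIdeal (𝓞 K)⁰ K)ˣ} (A : InverseClass J) :
    ∃ a : K, (A.1.frac * J : FractionalIdeal (𝓞 K)⁰ K) =
      FractionalIdeal.spanSingleton (𝓞 K)⁰ a := by
  rw [← Units.val_mul, ← FractionalIdeal.isPrincipal_iff]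
  exact ClassGroup.mk_eq_one_iff.1 A.2

/-- A generator of the principal ideal `A * J`. -/
noncomputable def generator {J : (FractionalIdeal (𝓞 K)⁰ K)ˣ} (A : InverseClass J) : K :=
  (exists_spanSingleton_eq_mul A).choose

lemma spanSingleton_generator {J : (FractionalIdeal (𝓞 K)⁰ K)ˣ} (A : InverseClass J) :
    FractionalIdeal.spanSingleton (𝓞 K)⁰ (generator A) = A.1.frac * J :=
  (exists_spanSingleton_eq_mul A).choose_spec.symm

lemma generator_ne_zero {J : (FractionalIdeal (𝓞 K)⁰ K)ˣ} (A : InverseClass J) :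
    generator A ≠ 0 := by
  rw [Ne, ← FractionalIdeal.spanSingleton_eq_zero_iff (R := 𝓞 K) (S := (𝓞 K)⁰),
    spanSingleton_generator]
  exact (A.1.frac * J).ne_zero

lemma generator_mem {J : (FractionalIdeal (𝓞 K)⁰ K)ˣ} (A : InverseClass J) :
    generator A ∈ J.1 := by
  rw [← FractionalIdeal.spanSingleton_le_iff_mem, spanSingleton_generator, A.1.coe_frac]
  exact mul_le_of_le_one_left' FractionalIdeal.coeIdeal_le_one

lemma abs_norm_generator {J : (FractionalIdeal (𝓞 K)⁰ K)ˣ} (A : InverseClass J) :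
    |Algebra.norm ℚ (generator A)| =
      Ideal.absNorm (A.1 : Ideal (𝓞 K)) * FractionalIdeal.absNorm J.1 := by
  rw [← FractionalIdeal.absNorm_span_singleton (𝓞 K), spanSingleton_generator, map_mul,
    A.1.coe_frac, FractionalIdeal.coeIdeal_absNorm]

lemma unit_mul_mem {F : Type*} [Field F] {I : FractionalIdeal (𝓞 F)⁰ F} {a : F} (ha : a ∈ I)
    (ε : (𝓞 F)ˣ) : (ε : F) * a ∈ I := by
  rw [← Algebra.smul_def]
  exact I.coeToSubmodule.smul_mem (ε : 𝓞 F) ha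

lemma spanSingleton_unit_mul (ε : (𝓞 K)ˣ) (a : K) :
    FractionalIdeal.spanSingleton (𝓞 K)⁰ ((ε : K) * a) =
      FractionalIdeal.spanSingleton (𝓞 K)⁰ a :=
  (FractionalIdeal.spanSingleton_eq_spanSingleton.2 ⟨ε, Algebra.smul_def (ε : 𝓞 K) a⟩).symm

lemma exists_inverseClass_spanSingleton_eq {J : (FractionalIdeal (𝓞 K)⁰ K)ˣ} {b : K}
    (hb : b ∈ J.1) (hb₀ : b ≠ 0) :
    ∃ A : InverseClass J, FractionalIdeal.spanSingleton (𝓞 K)⁰ b = A.1.frac * J := by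
  have hle : FractionalIdeal.spanSingleton (𝓞 K)⁰ b * (J⁻¹ : (FractionalIdeal (𝓞 K)⁰ K)ˣ) ≤ 1 := by
    rw [← J.mul_inv]
    gcongr
    exact FractionalIdeal.spanSingleton_le_iff_mem.2 hb
  obtain ⟨A, hA⟩ := FractionalIdeal.le_one_iff_exists_coeIdeal.1 hle
  have hspan : FractionalIdeal.spanSingleton (𝓞 K)⁰ b = A * J := by
    rw [hA, Units.inv_mul_cancel_right]
  have hA₀ : A ≠ ⊥ := by
    rintro rfl
    rw [FractionalIdeal.coeIdeal_bot, zero_mul, FractionalIdeal.spanSingleton_eq_zero_iff] at hspan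
    exact hb₀ hspan
  let A' : NonzeroIdeal K := ⟨A, hA₀⟩
  refine ⟨⟨A', ClassGroup.mk_eq_one_iff.2 ((FractionalIdeal.isPrincipal_iff _).2 ⟨b, ?_⟩)⟩, ?_⟩
  · rw [Units.val_mul, A'.coe_frac, hspan]
  · rw [A'.coe_frac, hspan]

/-- The factorisation of the nonzero elements of `J` as a unit times the chosen generator. -/
noncomputable def inverseClassProdUnitsEquiv (J : (FractionalIdeal (𝓞 K)⁰ K)ˣ) :
    InverseClass J × (𝓞 K)ˣ ≃ {a : K // a ∈ J.1 ∧ a ≠ 0} := by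
  refine Equiv.ofBijective (fun p ↦ ⟨p.2 * generator p.1, unit_mul_mem (generator_mem p.1) p.2,
    mul_ne_zero p.2.coe_ne_zero (generator_ne_zero p.1)⟩) ⟨?_, ?_⟩
  · rintro ⟨A, ε⟩ ⟨B, η⟩ h
    have hmul : (ε : K) * generator A = η * generator B := congrArg Subtype.val h
    have hspan : (A.1.frac * J : FractionalIdeal (𝓞 K)⁰ K) = B.1.frac * J := by
      rw [← spanSingleton_generator, ← spanSingleton_generator, ← spanSingleton_unit_mul ε, hmul,
        spanSingleton_unit_mul]
    obtain rfl : A = B := Subtype.ext <| NonzeroIdeal.frac_injective <| Units.ext <|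
      J.mul_left_inj.1 hspan
    exact Prod.ext rfl (Units.coe_injective K (mul_right_cancel₀ (generator_ne_zero A) hmul))
  · rintro ⟨b, hb, hb₀⟩
    obtain ⟨A, hA⟩ := exists_inverseClass_spanSingleton_eq hb hb₀
    rw [← spanSingleton_generator, eq_comm, FractionalIdeal.spanSingleton_eq_spanSingleton] at hA
    obtain ⟨ε, hε⟩ := hA
    exact ⟨(A, ε), Subtype.ext ((Algebra.smul_def _ _).symm.trans hε)⟩

/-- A family of fractional ideals containing exactly one representative of each ideal class. -/
def IsClassSystem {ι : Type*} (J : ι → (FractionalIdeal (𝓞 K)⁰ K)ˣ) : Prop :=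
  Function.Bijective fun i ↦ ClassGroup.mk K (J i)

lemma IsClassSystem.tsum_inverseClass {ι : Type*} {J : ι → (FractionalIdeal (𝓞 K)⁰ K)ˣ}
    (hJ : IsClassSystem J) (F : NonzeroIdeal K → ℝ≥0∞) :
    ∑' i, ∑' A : InverseClass (J i), F A = ∑' A, F A := by
  let e := Equiv.ofBijective _ hJ
  let c (A : NonzeroIdeal K) : ι := e.symm (ClassGroup.mk K A.frac)⁻¹
  have hc (i : ι) (A : NonzeroIdeal K) : ClassGroup.mk K (A.frac * J i) = 1 ↔ c A = i := by
    rw [Equiv.symm_apply_eq, map_mul, mul_eq_one_iff_inv_eq]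
    rfl
  calc ∑' i, ∑' A : InverseClass (J i), F A = ∑' i, ∑' A : {A // c A = i}, F A :=
        tsum_congr fun i ↦ (Equiv.subtypeEquivRight (hc i)).tsum_eq fun A : {A // c A = i} ↦ F A
    _ = ∑' A, F A := by
        rw [← ENNReal.tsum_sigma' fun p : Σ i, {A // c A = i} ↦ F p.2]
        exact (Equiv.sigmaFiberEquiv c).tsum_eq F

lemma exists_isClassSystem :
    ∃ J : ClassGroup (𝓞 K) → (FractionalIdeal (𝓞 K)⁰ K)ˣ, IsClassSystem J := by
  choose A hA using ClassGroup.mk0_surjective (R := 𝓞 K)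
  refine ⟨fun C ↦ FractionalIdeal.mk0 K (A C), ?_⟩
  have hid : (fun C ↦ ClassGroup.mk K (FractionalIdeal.mk0 K (A C))) = id :=
    funext fun C ↦ (ClassGroup.mk_mk0 K _).trans (hA C)
  rw [IsClassSystem, hid]
  exact Function.bijective_id

lemma dualIdeal_eq_dualIdeal_one_mul_inv (I : (FractionalIdeal (𝓞 K)⁰ K)ˣ) :
    dualIdeal I = dualIdeal 1 * I⁻¹ :=
  Units.ext <| (FractionalIdeal.dual_eq_mul_inv ℤ ℚ I.1).trans <| by
    rw [Units.val_mul, Units.val_inv_eq_inv_val]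
    rfl

lemma IsClassSystem.dual {ι : Type*} {J : ι → (FractionalIdeal (𝓞 K)⁰ K)ˣ}
    (hJ : IsClassSystem J) : IsClassSystem fun i ↦ dualIdeal (J i) := by
  have hclass : (fun i ↦ ClassGroup.mk K (dualIdeal (J i))) =
      fun i ↦ ClassGroup.mk K (dualIdeal 1) * (ClassGroup.mk K (J i))⁻¹ :=
    funext fun i ↦ by rw [dualIdeal_eq_dualIdeal_one_mul_inv, map_mul, map_inv]
  rw [IsClassSystem, hclass]
  exact (Equiv.mulLeft (ClassGroup.mk K (dualIdeal 1))).bijective.comp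
    ((Equiv.inv _).bijective.comp hJ)

lemma thetaMellin_eq_tsum_inverseClass (J : (FractionalIdeal (𝓞 K)⁰ K)ˣ) {s : ℝ} (hs : 0 < s) :
    thetaMellin J.1 s = torsionOrder K * logHaarFactor K * ENNReal.ofReal (archFactor K s) *
      ∑' A : InverseClass J, ENNReal.ofReal
        (((Ideal.absNorm (A : Ideal (𝓞 K)) : ℝ) * FractionalIdeal.absNorm J.1) ^ (-s)) := by
  classical
  have hterm (A : InverseClass J) : ∑' ε : (𝓞 K)ˣ, ∫⁻ h in unitDomain K,
        termMellin s (ε * generator A) h =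
      torsionOrder K * logHaarFactor K * ENNReal.ofReal (archFactor K s) * ENNReal.ofReal
        (((Ideal.absNorm (A : Ideal (𝓞 K)) : ℝ) * FractionalIdeal.absNorm J.1) ^ (-s)) := by
    rw [tsum_unit_setLIntegral_termMellin, lintegral_termMellin hs (generator_ne_zero A),
      ENNReal.ofReal_mul (archFactor_pos hs).le, ← Rat.cast_abs, abs_norm_generator]
    push_cast
    ring
  rw [thetaMellin_eq_tsum, ← (inverseClassProdUnitsEquiv J).tsum_eq, ENNReal.tsum_prod',
    ← ENNReal.tsum_mul_left]
  exact tsum_congr hterm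

lemma IsClassSystem.sum_thetaMellin {ι : Type*} [Fintype ι]
    {J : ι → (FractionalIdeal (𝓞 K)⁰ K)ˣ} (hJ : IsClassSystem J) {s : ℝ} (hs : 0 < s) :
    ∑ i, ENNReal.ofReal ((FractionalIdeal.absNorm (J i).1 : ℝ) ^ s) * thetaMellin (J i).1 s =
      torsionOrder K * logHaarFactor K * ENNReal.ofReal (archFactor K s) *
        ∑' A : NonzeroIdeal K, ENNReal.ofReal ((Ideal.absNorm (A : Ideal (𝓞 K)) : ℝ) ^ (-s)) := by
  rw [← hJ.tsum_inverseClass, tsum_fintype, Finset.mul_sum]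
  refine Finset.sum_congr rfl fun i _ ↦ ?_
  have hnorm : (0 : ℝ) < FractionalIdeal.absNorm (J i).1 := Rat.cast_pos.2 (absNorm_pos (J i))
  rw [thetaMellin_eq_tsum_inverseClass _ hs, mul_left_comm, ← ENNReal.tsum_mul_left]
  congr 1
  refine tsum_congr fun A ↦ ?_
  rw [← ENNReal.ofReal_mul (by positivity), Real.mul_rpow (by positivity) hnorm.le, mul_left_comm,
    ← Real.rpow_add hnorm, add_neg_cancel, Real.rpow_zero, mul_one]

end IdealClasses

section Meromorphic

open Filter Topology

lemma countable_ne_of_frequently_eq {𝕜 E : Type*} [NontriviallyNormedField 𝕜]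
    [PreconnectedSpace 𝕜] [SecondCountableTopology 𝕜] [NormedAddCommGroup E] [NormedSpace 𝕜 E]
    {f g : 𝕜 → E} (hf : Meromorphic f) (hg : Meromorphic g) {x : 𝕜}
    (hfg : ∃ᶠ z in 𝓝[≠] x, f z = g z) : {z | f z ≠ g z}.Countable := by
  have horder (y : 𝕜) : meromorphicOrderAt (f - g) y = ⊤ := by
    by_contra hy
    refine (hf.sub hg).meromorphicOn.meromorphicOrderAt_ne_top_of_isPreconnected
      isPreconnected_univ (mem_univ y) (mem_univ x) hy (meromorphicOrderAt_eq_top_iff.2 ?_)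
    filter_upwards [((hf x).frequently_eq_iff_eventuallyEq (hg x)).1 hfg] with z hz
    exact sub_eq_zero.2 hz
  apply (HereditarilyLindelofSpace.isLindelof _).countable_of_isDiscrete
  refine isDiscrete_iff_nhdsNE.2 fun y _ ↦ disjoint_iff.1 (disjoint_principal_right.2 ?_)
  filter_upwards [meromorphicOrderAt_eq_top_iff.1 (horder y)] with z hz hne
  exact hne (sub_eq_zero.1 hz)

lemma frequently_nhdsNE_two_of_forall_one_lt {p : ℂ → Prop} (hp : ∀ s : ℝ, 1 < s → p s) :
    ∃ᶠ z in 𝓝[≠] (2 : ℂ), p z := by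
  have hcoe : Tendsto (fun t : ℝ ↦ (t : ℂ)) (𝓝[≠] 2) (𝓝[≠] ((2 : ℝ) : ℂ)) :=
    continuous_ofReal.continuousWithinAt.tendsto_nhdsWithin fun t ht ↦ ofReal_injective.ne ht
  have hone : ∀ᶠ t : ℝ in 𝓝[≠] 2, 1 < t := nhdsWithin_le_nhds (lt_mem_nhds one_lt_two)
  exact hcoe.frequently (hone.mono hp).frequently

lemma meromorphic_of_differentiable {f : ℂ → ℂ} (hf : Differentiable ℂ f) : Meromorphic f :=
  fun x ↦ (hf.analyticAt x).meromorphicAt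

end Meromorphic

section GammaFactors

/-- The gamma factor `Γ_ℝ(s) ^ r₁ * (Γ_ℂ(s) / 2) ^ r₂` of the completed zeta function. -/
noncomputable def gammaFactor (K : Type*) [Field K] [NumberField K] (s : ℂ) : ℂ :=
  Gammaℝ s ^ InfinitePlace.nrRealPlaces K * (Gammaℂ s / 2) ^ InfinitePlace.nrComplexPlaces K

lemma meromorphic_Gammaℝ : Meromorphic Gammaℝ := by
  simpa only [Pi.inv_def, inv_inv] using
    (meromorphic_of_differentiable differentiable_Gammaℝ_inv).inv

lemma meromorphic_Gammaℂ : Meromorphic Gammaℂ := by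
  simpa only [Pi.inv_def, inv_inv] using
    (meromorphic_of_differentiable differentiable_Gammaℂ_inv).inv

lemma meromorphic_gammaFactor : Meromorphic (gammaFactor K) :=
  meromorphic_Gammaℝ.pow.mul (meromorphic_Gammaℂ.div (.const 2)).pow

lemma prod_apply_mult {M : Type*} [CommMonoid M] (G : ℕ → M) :
    ∏ v : InfinitePlace K, G v.mult =
      G 1 ^ InfinitePlace.nrRealPlaces K * G 2 ^ InfinitePlace.nrComplexPlaces K := by
  classical
  simp only [InfinitePlace.mult, apply_ite G, Finset.prod_ite, Finset.prod_const,
    InfinitePlace.not_isReal_iff_isComplex, InfinitePlace.nrRealPlaces,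
    InfinitePlace.nrComplexPlaces, Fintype.card_subtype]

lemma ofReal_archFactor (s : ℝ) : (archFactor K s : ℂ) = gammaFactor K s := by
  let G (m : ℕ) : ℝ := (1 / (Real.pi * m)) ^ (m * s / 2) * Real.Gamma (m * s / 2)
  have hG (m : ℕ) :
      (G m : ℂ) = (Real.pi * m : ℂ) ^ (-(m * s / 2 : ℂ)) * Complex.Gamma (m * s / 2) := by
    have hpos : 0 ≤ Real.pi * m := by positivity
    simp only [G]
    rw [one_div, Real.inv_rpow hpos, ← Real.rpow_neg hpos, ofReal_mul, ofReal_cpow hpos,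
      ← Complex.Gamma_ofReal]
    push_cast
    rfl
  have hreal : (G 1 : ℂ) = Gammaℝ s := by
    rw [hG, Gammaℝ_def, Nat.cast_one, one_mul, mul_one, neg_div]
  have hcomplex : (G 2 : ℂ) = Gammaℂ s / 2 := by
    rw [hG, Gammaℂ_def, Nat.cast_two, mul_div_cancel_left₀ _ two_ne_zero,
      mul_comm (Real.pi : ℂ) 2]
    ring
  calc (archFactor K s : ℂ) = (∏ v : InfinitePlace K, G v.mult : ℝ) := rfl
    _ = gammaFactor K s := by
      rw [prod_apply_mult, gammaFactor, ← hreal, ← hcomplex]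
      push_cast
      rfl

lemma Gammaℝ_ne_zero {s : ℂ} (hs : ∀ n : ℕ, s ≠ -n) : Gammaℝ s ≠ 0 := by
  rw [Ne, Gammaℝ_eq_zero_iff, not_exists]
  exact fun n hn ↦ hs (2 * n) (by exact_mod_cast hn)

lemma Gammaℂ_ne_zero {s : ℂ} (hs : ∀ n : ℕ, s ≠ -n) : Gammaℂ s ≠ 0 := by
  rw [Gammaℂ_def]
  refine mul_ne_zero (mul_ne_zero two_ne_zero ?_) (Complex.Gamma_ne_zero hs)
  simp [Real.pi_ne_zero]

lemma inv_Gammaℂ_one_sub {s : ℂ} (hs : ∀ n : ℕ, s ≠ -n) :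
    (Gammaℂ (1 - s))⁻¹ =
      Gammaℂ s * Complex.cos (Real.pi * s / 2) * Complex.sin (Real.pi * s / 2) := by
  have hne := Gammaℂ_ne_zero hs
  calc (Gammaℂ (1 - s))⁻¹ = (Gammaℝ (1 - s))⁻¹ * (Gammaℝ (2 - s))⁻¹ := by
        rw [← Gammaℝ_mul_Gammaℝ_add_one, mul_inv]
        ring_nf
    _ = Gammaℂ s ^ 2 * Complex.cos (Real.pi * s / 2) * Complex.sin (Real.pi * s / 2) *
        (Gammaℝ s * Gammaℝ (s + 1))⁻¹ := by
        rw [inv_Gammaℝ_one_sub hs, inv_Gammaℝ_two_sub hs, mul_inv]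
        ring
    _ = Gammaℂ s * Complex.cos (Real.pi * s / 2) * Complex.sin (Real.pi * s / 2) := by
        rw [Gammaℝ_mul_Gammaℝ_add_one]
        field_simp

lemma Gammaℂ_pow (s : ℂ) (n : ℕ) :
    Gammaℂ s ^ n = 2 ^ (n * (1 - s)) * (Real.pi : ℂ) ^ (-n * s) * Complex.Gamma s ^ n := by
  have hcpow : (2 * Real.pi : ℂ) ^ (-s) = 2 ^ (-s) * (Real.pi : ℂ) ^ (-s) := by
    simpa using mul_cpow_ofReal_nonneg zero_le_two Real.pi_pos.le (-s)
  rw [neg_mul, ← mul_neg, cpow_nat_mul, cpow_nat_mul, ← mul_pow, ← mul_pow, Gammaℂ_def, hcpow,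
    sub_eq_add_neg, cpow_add _ _ two_ne_zero, cpow_one]
  ring

lemma gammaFactor_ne_zero {s : ℂ} (hs : ∀ n : ℕ, s ≠ -n) : gammaFactor K s ≠ 0 :=
  mul_ne_zero (pow_ne_zero _ (Gammaℝ_ne_zero hs))
    (pow_ne_zero _ (div_ne_zero (Gammaℂ_ne_zero hs) two_ne_zero))

lemma gammaFactor_eq_mul {s : ℂ} (hs : ∀ n : ℤ, s ≠ n) :
    gammaFactor K s = gammaFactor K (1 - s) * (Gammaℂ s ^ Module.finrank ℚ K *
      Complex.cos (Real.pi * s / 2) ^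
        (InfinitePlace.nrRealPlaces K + InfinitePlace.nrComplexPlaces K) *
      Complex.sin (Real.pi * s / 2) ^ InfinitePlace.nrComplexPlaces K) := by
  have hs₀ (n : ℕ) : s ≠ -n := by exact_mod_cast hs (-n)
  have hs₁ (n : ℕ) : 1 - s ≠ -n := fun h ↦ hs (1 + n) (by push_cast; linear_combination -h)
  have hreal : Gammaℝ s = Gammaℝ (1 - s) * (Gammaℂ s * Complex.cos (Real.pi * s / 2)) := by
    rw [← Gammaℝ_div_Gammaℝ_one_sub fun n ↦ by exact_mod_cast hs₀ (2 * n + 1),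
      mul_div_cancel₀ _ (Gammaℝ_ne_zero hs₁)]
  have hcomplex : Gammaℂ s / 2 = Gammaℂ (1 - s) / 2 * (Gammaℂ s ^ 2 *
      Complex.cos (Real.pi * s / 2) * Complex.sin (Real.pi * s / 2)) := by
    have hinv := inv_mul_cancel₀ (Gammaℂ_ne_zero hs₁)
    rw [inv_Gammaℂ_one_sub hs₀] at hinv
    linear_combination -(Gammaℂ s / 2) * hinv
  calc gammaFactor K s =
      (Gammaℝ (1 - s) * (Gammaℂ s * Complex.cos (Real.pi * s / 2))) ^
        InfinitePlace.nrRealPlaces K *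
      (Gammaℂ (1 - s) / 2 * (Gammaℂ s ^ 2 * Complex.cos (Real.pi * s / 2) *
        Complex.sin (Real.pi * s / 2))) ^ InfinitePlace.nrComplexPlaces K := by
        rw [← hreal, ← hcomplex, gammaFactor]
    _ = _ := by
        rw [gammaFactor, ← InfinitePlace.card_add_two_mul_card_eq_rank]
        simp only [mul_pow, pow_add, pow_mul]
        ring

end GammaFactors

section CompletedZeta

open scoped nonZeroDivisors ENNReal
open _root_.NumberField.Units (torsionOrder)

lemma toReal_lintegral_eq_integral_of_integrableOn_ofReal {X : Type*} [MeasurableSpace X]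
    {μ : Measure X} {f : X → ℝ≥0∞} (hf : ∀ᵐ x ∂μ, f x ≠ ∞)
    (hint : Integrable (fun x ↦ ((f x).toReal : ℂ)) μ) :
    ∫⁻ x, f x ∂μ ≠ ∞ ∧ ∫ x, ((f x).toReal : ℂ) ∂μ = (∫⁻ x, f x ∂μ).toReal := by
  have hreal : Integrable (fun x ↦ (f x).toReal) μ := by simpa using hint.re
  have hcoe : ∫⁻ x, f x ∂μ = ∫⁻ x, ENNReal.ofReal (f x).toReal ∂μ :=
    lintegral_congr_ae (hf.mono fun x hx ↦ (ENNReal.ofReal_toReal hx).symm)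
  have hnonneg : 0 ≤ᵐ[μ] fun x ↦ (f x).toReal := ae_of_all _ fun _ ↦ ENNReal.toReal_nonneg
  refine ⟨hcoe ▸ ((hasFiniteIntegral_iff_ofReal hnonneg).1 hreal.2).ne, ?_⟩
  rw [integral_complex_ofReal, hcoe, integral_eq_lintegral_of_nonneg_ae hnonneg hreal.1]

lemma thetaMellin_ne_top_and_Λ_eq (I : (FractionalIdeal (𝓞 K)⁰ K)ˣ) {s : ℝ} (hs : 1 < s) :
    thetaMellin I.1 s ≠ ∞ ∧
      (thetaPair I).Λ ((Module.finrank ℚ K : ℂ) * s / 2) = (thetaMellin I.1 s).toReal := by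
  classical
  set n := Module.finrank ℚ K
  have hk : (thetaPair I).k < ((n : ℂ) * s / 2).re := by
    have hn₀ : (0 : ℝ) < n := Nat.cast_pos.2 Module.finrank_pos
    have hre : ((n : ℂ) * s / 2).re = n * s / 2 := by
      rw [show (n : ℂ) * s / 2 = ((n * s / 2 : ℝ) : ℂ) by push_cast; rfl, ofReal_re]
    rw [hre]
    change (n : ℝ) / 2 < n * s / 2
    gcongr
    exact lt_mul_of_one_lt_right hn₀ hs
  obtain ⟨hconv, hmellin⟩ := (thetaPair I).hasMellin hk
  have hterm : EqOn (fun x : ℝ ↦ (x : ℂ) ^ ((n : ℂ) * s / 2 - 1) •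
        ((thetaPair I).f x - (thetaPair I).f₀))
      (fun x ↦ ((thetaIntegral₀ I.1 x * ENNReal.ofReal (x ^ (n * s / 2 - 1))).toReal : ℂ))
      (Ioi 0) := by
    intro x hx
    have hx₀ : 0 < x := hx
    change (x : ℂ) ^ ((n : ℂ) * s / 2 - 1) •
        (complexTheta I x - ((volume (unitDomain K)).toReal : ℂ)) =
      ((thetaIntegral₀ I.1 x * ENNReal.ofReal (x ^ (n * s / 2 - 1))).toReal : ℂ)
    rw [complexTheta_sub_volume I hx₀, ENNReal.toReal_mul,
      ENNReal.toReal_ofReal (by positivity), smul_eq_mul, mul_comm, ofReal_mul,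
      ofReal_cpow hx₀.le]
    push_cast
    rfl
  rw [← hmellin, mellin, setIntegral_congr_fun measurableSet_Ioi hterm]
  refine toReal_lintegral_eq_integral_of_integrableOn_ofReal ?_
    ((integrableOn_congr_fun hterm measurableSet_Ioi).1 hconv)
  exact ae_restrict_of_forall_mem measurableSet_Ioi fun x hx ↦
    ENNReal.mul_ne_top (thetaIntegral₀_ne_top I hx) ENNReal.ofReal_ne_top

/-- The completed Dedekind zeta function, as a sum over the ideal classes represented by `J` of
completed theta transforms, up to a constant. -/
noncomputable def completedZeta {ι : Type*} [Fintype ι] (J : ι → (FractionalIdeal (𝓞 K)⁰ K)ˣ)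
    (s : ℂ) : ℂ :=
  ∑ i, ((FractionalIdeal.absNorm (J i).1 : ℝ) : ℂ) ^ s *
    (thetaPair (J i)).Λ ((Module.finrank ℚ K : ℂ) * s / 2)

/-- The constant relating `completedZeta` to the Dedekind zeta series. -/
noncomputable def zetaConst (K : Type*) [Field K] [NumberField K] : ℝ :=
  torsionOrder K * logHaarFactor K

lemma zetaConst_pos : 0 < zetaConst K :=
  mul_pos (Nat.cast_pos.2 (Units.torsionOrder_pos K)) logHaarFactor_pos

lemma IsClassSystem.completedZeta_ofReal {ι : Type*} [Fintype ι]
    {J : ι → (FractionalIdeal (𝓞 K)⁰ K)ˣ} (hJ : IsClassSystem J) {s : ℝ} (hs : 1 < s) :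
    completedZeta J s = zetaConst K * archFactor K s *
      ∑' A : NonzeroIdeal K, (Ideal.absNorm (A : Ideal (𝓞 K)) : ℂ) ^ (-(s : ℂ)) := by
  have hs₀ : 0 < s := one_pos.trans hs
  have hterm (i : ι) : ((FractionalIdeal.absNorm (J i).1 : ℝ) : ℂ) ^ (s : ℂ) *
        (thetaPair (J i)).Λ ((Module.finrank ℚ K : ℂ) * s / 2) =
      ((ENNReal.ofReal ((FractionalIdeal.absNorm (J i).1 : ℝ) ^ s) *
        thetaMellin (J i).1 s).toReal : ℂ) := by
    have hnorm : (0 : ℝ) < FractionalIdeal.absNorm (J i).1 := Rat.cast_pos.2 (absNorm_pos (J i))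
    rw [(thetaMellin_ne_top_and_Λ_eq (J i) hs).2, ENNReal.toReal_mul,
      ENNReal.toReal_ofReal (by positivity), ofReal_mul, ofReal_cpow hnorm.le]
  have hfinite (i : ι) (_ : i ∈ Finset.univ) :
      ENNReal.ofReal ((FractionalIdeal.absNorm (J i).1 : ℝ) ^ s) * thetaMellin (J i).1 s ≠ ∞ :=
    ENNReal.mul_ne_top ENNReal.ofReal_ne_top (thetaMellin_ne_top_and_Λ_eq (J i) hs).1
  have hideal (A : NonzeroIdeal K) :
      ((ENNReal.ofReal ((Ideal.absNorm (A : Ideal (𝓞 K)) : ℝ) ^ (-s))).toReal : ℂ) =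
        (Ideal.absNorm (A : Ideal (𝓞 K)) : ℂ) ^ (-(s : ℂ)) := by
    rw [ENNReal.toReal_ofReal (by positivity), ofReal_cpow (by positivity)]
    push_cast
    rfl
  simp only [completedZeta, hterm, ← hideal]
  rw [← ofReal_sum, ← ENNReal.toReal_sum hfinite, hJ.sum_thetaMellin hs₀, ENNReal.toReal_mul,
    ENNReal.tsum_toReal_eq fun _ ↦ ENNReal.ofReal_ne_top, ENNReal.toReal_mul,
    ENNReal.toReal_ofReal (archFactor_pos hs₀).le]
  push_cast [zetaConst]
  simp

lemma meromorphic_Λ (P : WeakFEPair ℂ) : Meromorphic P.Λ := by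
  intro s
  have hΛ₀ := meromorphic_of_differentiable P.differentiable_Λ₀ s
  unfold WeakFEPair.Λ
  fun_prop

lemma meromorphic_completedZeta {ι : Type*} [Fintype ι] (J : ι → (FractionalIdeal (𝓞 K)⁰ K)ˣ) :
    Meromorphic (completedZeta J) := by
  have hsum : completedZeta J = ∑ i, fun s : ℂ ↦ ((FractionalIdeal.absNorm (J i).1 : ℝ) : ℂ) ^ s *
      (thetaPair (J i)).Λ ((Module.finrank ℚ K : ℂ) * s / 2) := by
    ext s
    simp only [completedZeta, Finset.sum_apply]
  rw [hsum]
  refine Meromorphic.sum fun i _ ↦ Meromorphic.mul (meromorphic_of_differentiable fun s ↦ ?_)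
    fun s ↦ (meromorphic_Λ (thetaPair (J i)) _).comp_analyticAt (by fun_prop)
  have hnorm : ((FractionalIdeal.absNorm (J i).1 : ℝ) : ℂ) ≠ 0 :=
    ofReal_ne_zero.2 (Rat.cast_pos.2 (absNorm_pos (J i))).ne'
  exact ((hasDerivAt_id s).const_cpow (.inl hnorm)).differentiableAt

lemma IsClassSystem.countable_completedZeta_ne {ι : Type*} [Fintype ι]
    {J : ι → (FractionalIdeal (𝓞 K)⁰ K)ˣ} (hJ : IsClassSystem J) {Z : ℂ → ℂ} (hmero : Meromorphic Z)
    (hZ : ∀ s : ℂ, 1 < s.re →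
      Z s = ∑' A : NonzeroIdeal K, (Ideal.absNorm (A : Ideal (𝓞 K)) : ℂ) ^ (-s)) :
    {s | completedZeta J s ≠ zetaConst K * gammaFactor K s * Z s}.Countable := by
  refine countable_ne_of_frequently_eq (meromorphic_completedZeta J)
    (((Meromorphic.const (zetaConst K : ℂ)).mul meromorphic_gammaFactor).mul hmero)
    (frequently_nhdsNE_two_of_forall_one_lt fun s hs ↦ ?_)
  rw [hJ.completedZeta_ofReal hs, ofReal_archFactor, hZ s hs]

lemma cpow_one_sub_mul_inv_mul_sqrt {N D : ℝ} (hN : 0 < N) (hD : 0 < D) (s : ℂ) :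
    (N : ℂ) ^ (1 - s) * ((N * √D)⁻¹ : ℝ) = (D : ℂ) ^ (s - 1 / 2) * ((N⁻¹ * D⁻¹ : ℝ) : ℂ) ^ s := by
  have hN₀ : (N : ℂ) ≠ 0 := ofReal_ne_zero.2 hN.ne'
  have hD₀ : (D : ℂ) ≠ 0 := ofReal_ne_zero.2 hD.ne'
  have hinv {x : ℝ} (hx : 0 < x) : ((x⁻¹ : ℝ) : ℂ) ^ s = (x : ℂ) ^ (-s) := by
    rw [ofReal_inv, inv_cpow _ _ (by simpa [arg_ofReal_of_nonneg hx.le] using Real.pi_ne_zero.symm),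
      cpow_neg]
  have hsqrt : ((√D)⁻¹ : ℂ) = (D : ℂ) ^ (-(1 / 2) : ℂ) := by
    rw [Real.sqrt_eq_rpow, ofReal_cpow hD.le, cpow_neg]
    push_cast
    rfl
  calc (N : ℂ) ^ (1 - s) * ((N * √D)⁻¹ : ℝ)
      = (N : ℂ) ^ (1 - s) * (N : ℂ) ^ (-1 : ℂ) * (D : ℂ) ^ (-(1 / 2) : ℂ) := by
        rw [cpow_neg_one, ← hsqrt, mul_inv, mul_assoc]
        push_cast
        rfl
    _ = (N : ℂ) ^ (-s) * (D : ℂ) ^ ((s - 1 / 2) + -s) := by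
        rw [← cpow_add _ _ hN₀]
        ring_nf
    _ = (D : ℂ) ^ (s - 1 / 2) * ((N⁻¹ * D⁻¹ : ℝ) : ℂ) ^ s := by
        rw [ofReal_mul, mul_cpow_ofReal_nonneg (inv_pos.2 hN).le (inv_pos.2 hD).le, hinv hN,
          hinv hD, cpow_add _ _ hD₀]
        ring

lemma absNorm_cpow_one_sub_mul_covol_inv (I : (FractionalIdeal (𝓞 K)⁰ K)ˣ) (s : ℂ) :
    ((FractionalIdeal.absNorm I.1 : ℝ) : ℂ) ^ (1 - s) * ((covol I)⁻¹ : ℝ) =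
      ((discr K).natAbs : ℂ) ^ (s - 1 / 2) *
        ((FractionalIdeal.absNorm (dualIdeal I).1 : ℝ) : ℂ) ^ s := by
  have hdiscr : ((discr K).natAbs : ℂ) = ((|(discr K : ℝ)| : ℝ) : ℂ) := by
    rw [← ofReal_natCast, Nat.cast_natAbs, Int.cast_abs]
  have hD : 0 < |(discr K : ℝ)| := abs_pos.2 (Int.cast_ne_zero.2 (discr_ne_zero K))
  rw [absNorm_dualIdeal, hdiscr, covol,
    cpow_one_sub_mul_inv_mul_sqrt (Rat.cast_pos.2 (absNorm_pos I)) hD]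
  push_cast
  rfl

lemma completedZeta_one_sub {ι : Type*} [Fintype ι] (J : ι → (FractionalIdeal (𝓞 K)⁰ K)ˣ) (s : ℂ) :
    completedZeta J (1 - s) =
      ((discr K).natAbs : ℂ) ^ (s - 1 / 2) * completedZeta (fun i ↦ dualIdeal (J i)) s := by
  simp only [completedZeta, Finset.mul_sum]
  refine Finset.sum_congr rfl fun i _ ↦ ?_
  have harg : (Module.finrank ℚ K : ℂ) * (1 - s) / 2 =
      (thetaPair (J i)).k - (Module.finrank ℚ K : ℂ) * s / 2 := by
    change _ = (((Module.finrank ℚ K : ℝ) / 2 : ℝ) : ℂ) - (Module.finrank ℚ K : ℂ) * s / 2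
    push_cast
    ring
  rw [harg, (thetaPair (J i)).functional_equation, thetaPair_symm, smul_eq_mul, ← mul_assoc,
    ← mul_assoc, ← absNorm_cpow_one_sub_mul_covol_inv]
  rfl

end CompletedZeta

end Hecke

theorem dedekind_functional_equation (K : Type*) [Field K] [NumberField K]
    (Z : ℂ → ℂ) (hmero : MeromorphicOn Z Set.univ)
    (hZ : ∀ s : ℂ, 1 < s.re →
      Z s = ∑' I : {I : Ideal (𝓞 K) // I ≠ ⊥}, (Ideal.absNorm (I : Ideal (𝓞 K)) : ℂ) ^ (-s)) :
    ∃ E : Set ℂ, E.Countable ∧ ∀ s ∉ E,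
      Z (1 - s) = (((discr K).natAbs : ℂ)) ^ (s - 1 / 2) *
        2 ^ ((Module.finrank ℚ K : ℂ) * (1 - s)) *
        (Real.pi : ℂ) ^ (-(Module.finrank ℚ K : ℂ) * s) *
        Complex.Gamma s ^ (Module.finrank ℚ K) *
        Complex.cos (Real.pi * s / 2) ^
          (InfinitePlace.nrRealPlaces K + InfinitePlace.nrComplexPlaces K) *
        Complex.sin (Real.pi * s / 2) ^ (InfinitePlace.nrComplexPlaces K) *
        Z s := by
  obtain ⟨J, hJ⟩ := Hecke.exists_isClassSystem (K := K)
  have hcount := hJ.countable_completedZeta_ne (meromorphicOn_univ.1 hmero) hZ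
  have hcount' := hJ.dual.countable_completedZeta_ne (meromorphicOn_univ.1 hmero) hZ
  refine ⟨_, ((hcount.preimage (sub_right_injective (b := 1))).union hcount').union
    (Set.countable_range ((↑) : ℤ → ℂ)), fun s hs ↦ ?_⟩
  simp only [Set.mem_union, Set.mem_preimage, Set.mem_ofPred_eq, Set.mem_range, not_or, not_not,
    not_exists] at hs
  obtain ⟨⟨hone_sub, hdual⟩, hint⟩ := hs
  have hs_int (n : ℤ) : s ≠ n := fun h ↦ hint n h.symm
  have hne : (Hecke.zetaConst K : ℂ) * Hecke.gammaFactor K (1 - s) ≠ 0 :=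
    mul_ne_zero (ofReal_ne_zero.2 Hecke.zetaConst_pos.ne')
      (Hecke.gammaFactor_ne_zero fun n h ↦ hs_int (1 + n) (by push_cast; linear_combination -h))
  have hfe := Hecke.completedZeta_one_sub J s
  rw [hone_sub, hdual, Hecke.gammaFactor_eq_mul hs_int, Hecke.Gammaℂ_pow] at hfe
  exact mul_left_cancel₀ hne (by linear_combination hfe)
end
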